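/- arXiv:1702.00914 — 3 statements merged into one kernel-verified Lean document; each statement's English description precedes it below -/
import Mathlib

section
/- Let G be a finite simple 2K2-free graph with maximum degree Δ(G) ≥ 5. If χ(G) = Δ(G), then G contains a clique on Δ(G) vertices, i.e., ω(G) ≥ Δ(G). -/
/-- A simple graph is `2K2`-free if it has no four distinct vertices `a b c d` with
`ab` and `cd` edges and none of `ac, ad, bc, bd` an edge. -/
def TwoK2Free {V : Type*} (G : SimpleGraph V) : Prop :=
  ¬ ∃ a b c d : V, a ≠ b ∧ a ≠ c ∧ a ≠ d ∧ b ≠ c ∧ b ≠ d ∧ c ≠ d ∧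
      G.Adj a b ∧ G.Adj c d ∧ ¬ G.Adj a c ∧ ¬ G.Adj a d ∧ ¬ G.Adj b c ∧ ¬ G.Adj b d

/-!
Write `Δ = m + 1` and suppose that there is no clique of size `m + 1`; we show that `m` colours
suffice. A minimal subgraph that is not `m`-colorable is finite, with all degrees `m` or `m + 1`.

If it contains a clique `K` of size `m`, let every vertex of `K` be its own colour, so that the
colours available outside `K` are given by lists. By `2K2`-freeness, two adjacent vertices outside
`K` see together all vertices of `K` but at most one. As every vertex of `K` has at most two
neighbours outside `K`, a count of the edges leaving `K` shows that there are at most `m` vertices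
outside `K`, or `m + 1` of which two can share a colour, and Hall's theorem assigns to them distinct
colours from their lists.

If there is no such clique, removing a maximal independent set lowers all degrees and `m` by one.
This reduces the problem to `m = 4` and a graph without `K₄`. Without triangles, the neighbourhoods
of two adjacent vertices and the rest are three independent sets. Otherwise, fix a triangle. The
vertices adjacent to exactly one of its corners, and those adjacent to exactly two, form three
independent sets each, and degree counting allows these six sets to be rearranged into four.
-/

/-! ### Colourings and induced subgraphs -/

section General

variable {V : Type*} {G : SimpleGraph V}

theorem TwoK2Free.adj_of_adj (hfree : TwoK2Free G) {a b c d : V}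
    (hab : G.Adj a b) (hcd : G.Adj c d) :
    G.Adj a c ∨ G.Adj a d ∨ G.Adj b c ∨ G.Adj b d := by
  by_contra! ⟨hac, had, hbc, hbd⟩
  refine hfree ⟨a, b, c, d, hab.ne, ?_, ?_, ?_, ?_, hcd.ne, hab, hcd, hac, had, hbc, hbd⟩
  · rintro rfl
    exact had hcd
  · rintro rfl
    exact hac hcd.symm
  · rintro rfl
    exact hbd hcd
  · rintro rfl
    exact hbc hcd.symm

theorem TwoK2Free.induce (hfree : TwoK2Free G) (s : Set V) : TwoK2Free (G.induce s) := by
  rintro ⟨a, b, c, d, -, -, -, -, -, -, hab, hcd, hac, had, hbc, hbd⟩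
  rcases hfree.adj_of_adj (SimpleGraph.induce_adj.1 hab) (SimpleGraph.induce_adj.1 hcd) with
    h | h | h | h
  exacts [hac h, had h, hbc h, hbd h]

theorem TwoK2Free.isIndepSet_of_adj (hfree : TwoK2Free G) {u v : V} (huv : G.Adj u v)
    {s : Set V} (hu : ∀ w ∈ s, ¬ G.Adj u w) (hv : ∀ w ∈ s, ¬ G.Adj v w) : G.IsIndepSet s := by
  intro a ha b hb _ hab
  rcases hfree.adj_of_adj huv hab with h | h | h | h
  exacts [hu a ha h, hu b hb h, hv a ha h, hv b hb h]

theorem colorable_card_of_isIndepSet {ι : Type*} [Fintype ι] {C : ι → Set V}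
    (hC : ∀ i, G.IsIndepSet (C i)) (hcover : ∀ v, ∃ i, v ∈ C i) :
    G.Colorable (Fintype.card ι) := by
  choose f hf using hcover
  exact (SimpleGraph.Coloring.mk f fun {u v} huv hfuv ↦
    hC (f u) (hf u) (hfuv ▸ hf v) huv.ne huv).colorable

theorem colorable_three_of_isIndepSet {P Q R : Set V} (hP : G.IsIndepSet P)
    (hQ : G.IsIndepSet Q) (hR : G.IsIndepSet R) (hcover : ∀ v, v ∈ P ∨ v ∈ Q ∨ v ∈ R) :
    G.Colorable 3 := by
  refine colorable_card_of_isIndepSet (C := ![P, Q, R]) ?_ ?_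
  · simpa [Fin.forall_fin_succ] using ⟨hP, hQ, hR⟩
  · simpa [Fin.exists_fin_succ] using hcover

theorem colorable_four_of_isIndepSet {P Q R S : Set V} (hP : G.IsIndepSet P)
    (hQ : G.IsIndepSet Q) (hR : G.IsIndepSet R) (hS : G.IsIndepSet S)
    (hcover : ∀ v, v ∈ P ∨ v ∈ Q ∨ v ∈ R ∨ v ∈ S) : G.Colorable 4 := by
  refine colorable_card_of_isIndepSet (C := ![P, Q, R, S]) ?_ ?_
  · simpa [Fin.forall_fin_succ] using ⟨hP, hQ, hR, hS⟩
  · simpa [Fin.exists_fin_succ] using hcover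

theorem colorable_succ_of_isIndepSet {s : Set V} {n : ℕ} (hs : G.IsIndepSet s)
    (hcol : (G.induce sᶜ).Colorable n) : G.Colorable (n + 1) := by
  obtain ⟨C⟩ := hcol
  let D : Option (Fin n) → Set V := fun o ↦ o.elim s fun i ↦ Subtype.val '' {v | C v = i}
  have hD : ∀ o, G.IsIndepSet (D o) := by
    rintro (_ | i)
    · exact hs
    · rintro _ ⟨u, rfl, rfl⟩ _ ⟨v, hv, rfl⟩ _ huv
      exact C.valid (SimpleGraph.induce_adj.2 huv) hv.symm
  simpa using colorable_card_of_isIndepSet hD fun v ↦ by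
    by_cases hv : v ∈ s
    · exact ⟨none, hv⟩
    · exact ⟨some (C ⟨v, hv⟩), ⟨v, hv⟩, rfl, rfl⟩

theorem colorable_of_encard_neighborSet_lt {v : V} {n : ℕ} (hv : (G.neighborSet v).encard < n)
    (hcol : (G.induce {v}ᶜ).Colorable n) : G.Colorable n := by
  classical
  obtain ⟨C⟩ := hcol
  obtain ⟨c, hc⟩ : ∃ c : Fin n, ∀ u : ({v}ᶜ : Set V), G.Adj v u → C u ≠ c := by
    by_contra! h
    choose g hadj hg using h
    have hinj : Function.Injective fun c ↦ (g c : V) := fun c d hcd ↦ by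
      rw [← hg c, ← hg d, Subtype.ext hcd]
    have hle : (Set.range fun c ↦ (g c : V)).encard ≤ (G.neighborSet v).encard :=
      Set.encard_le_encard (Set.range_subset_iff.2 hadj)
    have hcard : (n : ℕ∞) ≤ (Set.range fun c ↦ (g c : V)).encard := by
      simpa using hinj.encard_range
    exact (hcard.trans hle).not_gt hv
  refine ⟨SimpleGraph.Coloring.mk (fun u ↦ if h : u = v then c else C ⟨u, h⟩) ?_⟩
  intro a b hab
  rcases eq_or_ne a v with rfl | ha
  · simpa [hab.ne'] using (hc ⟨b, hab.ne'⟩ hab).symm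
  rcases eq_or_ne b v with rfl | hb
  · simpa [ha] using hc ⟨a, ha⟩ hab.symm
  simpa [ha, hb] using C.valid (v := ⟨a, ha⟩) (w := ⟨b, hb⟩) (SimpleGraph.induce_adj.2 hab)

theorem encard_neighborSet_eq_degree (v : V) [Fintype (G.neighborSet v)] :
    (G.neighborSet v).encard = G.degree v :=
  Set.encard_eq_coe_toFinset_card _

theorem encard_neighborSet_induce_le (s : Set V) (v : s) :
    ((G.induce s).neighborSet v).encard ≤ (G.neighborSet v).encard :=
  Set.encard_le_encard_of_injOn (f := Subtype.val) (fun _ h ↦ h) Subtype.val_injective.injOn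

theorem encard_neighborSet_induce_compl_add_one_le {s : Set V} (hs : Maximal G.IsIndepSet s)
    (v : (sᶜ : Set V)) :
    ((G.induce sᶜ).neighborSet v).encard + 1 ≤ (G.neighborSet v).encard := by
  obtain ⟨u, hus, hvu⟩ : ∃ u ∈ s, G.Adj v u := by
    by_contra! h
    exact v.2 (hs.mem_of_prop_insert
      (hs.prop.insert fun u hu _ ↦ ⟨h u hu, fun huv ↦ h u hu huv.symm⟩))
  have hu : u ∉ Subtype.val '' (G.induce sᶜ).neighborSet v := by
    rintro ⟨w, -, rfl⟩
    exact w.2 hus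
  rw [← Subtype.val_injective.encard_image, ← Set.encard_insert_of_notMem hu]
  refine Set.encard_le_encard (Set.insert_subset hvu ?_)
  rintro _ ⟨w, hw, rfl⟩
  exact hw

-- de Bruijn–Erdős
theorem colorable_of_forall_finset_induce {n : ℕ}
    (h : ∀ s : Finset V, (G.induce (s : Set V)).Colorable n) : G.Colorable n := by
  refine SimpleGraph.nonempty_hom_of_forall_finite_subgraph_hom fun G' hfin ↦ ?_
  refine (h hfin.toFinset).some.comp ⟨fun v ↦ ⟨v, by simp⟩, fun hab ↦ ?_⟩
  exact SimpleGraph.induce_adj.2 (G'.adj_sub hab)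

theorem exists_finset_not_colorable_forall_le_encard {n : ℕ} (h : ¬ G.Colorable n) :
    ∃ s : Finset V, ¬ (G.induce (s : Set V)).Colorable n ∧
      ∀ v, n ≤ ((G.induce (s : Set V)).neighborSet v).encard := by
  obtain ⟨s₀, hs₀⟩ := not_forall.1 (mt colorable_of_forall_finset_induce h)
  obtain ⟨s, hs, hmin⟩ := WellFounded.has_min (wellFounded_lt (α := Finset V))
    {s | ¬ (G.induce (s : Set V)).Colorable n} ⟨s₀, hs₀⟩
  refine ⟨s, hs, fun v ↦ not_lt.1 fun hv ↦ hs (colorable_of_encard_neighborSet_lt hv ?_)⟩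
  classical
  have hcol : (G.induce (s.erase v : Set V)).Colorable n :=
    not_not.1 fun h ↦ hmin _ h (Finset.erase_ssubset v.2)
  refine hcol.of_hom (G := (G.induce (s : Set V)).induce {v}ᶜ)
    ⟨fun u ↦ ⟨u, Finset.mem_erase.2 ⟨fun h ↦ u.2 (Subtype.ext h), u.1.2⟩⟩, fun hab ↦ hab⟩

theorem TwoK2Free.colorable_three_of_cliqueFree_three (hfree : TwoK2Free G)
    (hclique : G.CliqueFree 3) : G.Colorable 3 := by
  by_cases hbot : G = ⊥
  · exact (SimpleGraph.colorable_one_iff.2 hbot).mono (by norm_num)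
  obtain ⟨u, v, huv⟩ := SimpleGraph.ne_bot_iff_exists_adj.1 hbot
  have hnbrs := SimpleGraph.isIndepSet_neighborSet_of_triangleFree G hclique
  refine colorable_three_of_isIndepSet (hnbrs u) (hnbrs v)
    (hfree.isIndepSet_of_adj huv (s := {w | ¬ G.Adj u w ∧ ¬ G.Adj v w}) (fun _ h ↦ h.1)
      fun _ h ↦ h.2) fun w ↦ ?_
  simp only [SimpleGraph.mem_neighborSet, Set.mem_ofPred_eq]
  tauto

end General

/-! ### List colouring around a clique -/

section Clique

open Finset

theorem card_le_card_biUnion_of_card_filter_notMem_le {α β : Type*} [DecidableEq β]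
    {s u : Finset α} {r : Finset β} {L : α → Finset β} (hus : u ⊆ s)
    (hcard : #s ≤ #r) (hne : ∀ a ∈ s, (L a).Nonempty)
    (hpair : ∀ a ∈ s, ∀ b ∈ s, a ≠ b → 2 ≤ #(L a ∪ L b))
    (hmiss : ∀ c ∈ r, #{a ∈ s | c ∉ L a} ≤ 2) : #u ≤ #(u.biUnion L) := by
  classical
  rcases Nat.lt_or_ge #u 3 with hu | hu
  · interval_cases hu' : #u
    · exact Nat.zero_le _
    · obtain ⟨a, rfl⟩ := card_eq_one.1 hu'
      simpa using hne a (hus (mem_singleton_self a))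
    · obtain ⟨a, b, hab, rfl⟩ := card_eq_two.1 hu'
      simpa using hpair a (hus (by simp)) b (hus (by simp)) hab
  · have hr : r ⊆ u.biUnion L := by
      intro c hc
      by_contra hcu
      have hsub : u ⊆ {a ∈ s | c ∉ L a} := fun a ha ↦
        mem_filter.2 ⟨hus ha, fun h ↦ hcu (mem_biUnion.2 ⟨a, ha, h⟩)⟩
      have := (card_le_card hsub).trans (hmiss c hc)
      omega
    exact (card_le_card hus).trans (hcard.trans (card_le_card hr))

theorem exists_injOn_mem_of_card_filter_notMem_le {α β : Type*} [DecidableEq β]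
    [Nonempty β] {s : Finset α} {r : Finset β} {L : α → Finset β} (hcard : #s ≤ #r)
    (hne : ∀ a ∈ s, (L a).Nonempty) (hpair : ∀ a ∈ s, ∀ b ∈ s, a ≠ b → 2 ≤ #(L a ∪ L b))
    (hmiss : ∀ c ∈ r, #{a ∈ s | c ∉ L a} ≤ 2) :
    ∃ f : α → β, Set.InjOn f s ∧ ∀ a ∈ s, f a ∈ L a := by
  classical
  obtain ⟨f, hf, hfL⟩ :=
    (all_card_le_biUnion_card_iff_exists_injective fun a : s ↦ L a).1 fun u ↦ by
      simpa [map_eq_image, image_biUnion, card_image_of_injective _ Subtype.val_injective] using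
        card_le_card_biUnion_of_card_filter_notMem_le (u := u.map (.subtype _))
          (map_subtype_subset u) hcard hne hpair hmiss
  refine ⟨Function.extend Subtype.val f fun _ ↦ Classical.arbitrary β, fun a ha b hb hab ↦ ?_,
    fun a ha ↦ ?_⟩
  · rw [Subtype.val_injective.extend_apply f _ ⟨a, ha⟩,
      Subtype.val_injective.extend_apply f _ ⟨b, hb⟩] at hab
    exact congrArg Subtype.val (hf hab)
  · rw [Subtype.val_injective.extend_apply f _ ⟨a, ha⟩]
    exact hfL _

variable {V : Type*} [Fintype V] [DecidableEq V] {G : SimpleGraph V} [DecidableRel G.Adj]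
  {K : Finset V}

/-- The vertices of `K` that are not adjacent to `a`. If every vertex of the clique `K` serves as
its own colour, these are the colours available at a vertex `a` outside `K`. -/
abbrev colorList (G : SimpleGraph V) [DecidableRel G.Adj] (K : Finset V) (a : V) : Finset V :=
  K \ G.neighborFinset a

theorem card_neighborFinset_sdiff_add_card {c : V} (hK : G.IsClique K) (hc : c ∈ K) :
    #(G.neighborFinset c \ K) + #K = G.degree c + 1 := by
  have hinter : G.neighborFinset c ∩ K = K.erase c := by
    ext v
    simp only [mem_inter, SimpleGraph.mem_neighborFinset, mem_erase]
    exact ⟨fun h ↦ ⟨h.1.ne', h.2⟩, fun h ↦ ⟨hK hc h.2 h.1.symm, h.2⟩⟩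
  have := card_sdiff_add_card_inter (G.neighborFinset c) K
  rw [hinter, G.card_neighborFinset_eq_degree] at this
  have := card_erase_add_one hc
  omega

theorem card_neighborFinset_inter_add_card_colorList (K : Finset V) (a : V) :
    #(G.neighborFinset a ∩ K) + #(colorList G K a) = #K := by
  rw [add_comm, inter_comm]
  exact card_sdiff_add_card_inter K _

theorem sum_card_neighborFinset_inter_comm (s r : Finset V) :
    ∑ a ∈ s, #(G.neighborFinset a ∩ r) = ∑ c ∈ r, #(G.neighborFinset c ∩ s) := by
  convert sum_card_bipartiteAbove_eq_sum_card_bipartiteBelow (s := s) (t := r) G.Adj using 3 with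
    a _ c _
  · ext; simp [bipartiteAbove, and_comm]
  · ext; simp [bipartiteBelow, and_comm, G.adj_comm]

theorem sum_compl_card_neighborFinset_inter_le {d : ℕ}
    (hout : ∀ c ∈ K, #(G.neighborFinset c \ K) ≤ d) :
    ∑ a ∈ Kᶜ, #(G.neighborFinset a ∩ K) ≤ #K * d := by
  rw [sum_card_neighborFinset_inter_comm]
  exact sum_le_card_nsmul _ _ _ fun c hc ↦ sdiff_eq_inter_compl (G.neighborFinset c) K ▸ hout c hc

theorem TwoK2Free.card_clique_le (hfree : TwoK2Free G) (hK : G.IsClique K) {a b : V}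
    (hab : G.Adj a b) :
    #K ≤ #(G.neighborFinset a ∩ K) + #(G.neighborFinset b ∩ K) + 1 := by
  have hone : #(K \ (G.neighborFinset a ∪ G.neighborFinset b)) ≤ 1 := by
    refine card_le_one.2 fun c hc d hd ↦ ?_
    simp only [mem_sdiff, mem_union, SimpleGraph.mem_neighborFinset, not_or] at hc hd
    by_contra hcd
    rcases hfree.adj_of_adj hab (hK hc.1 hd.1 hcd) with h | h | h | h
    exacts [hc.2.1 h, hd.2.1 h, hc.2.2 h, hd.2.2 h]
  have hsplit := card_sdiff_add_card_inter K (G.neighborFinset a ∪ G.neighborFinset b)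
  have hunion := card_union_le (G.neighborFinset a ∩ K) (G.neighborFinset b ∩ K)
  rw [← union_inter_distrib_right, inter_comm] at hunion
  omega

theorem colorList_nonempty (hK : G.IsClique K) (hclique : G.CliqueFree (#K + 1))
    (a : V) : (colorList G K a).Nonempty := by
  by_contra! h
  rw [sdiff_eq_empty_iff_subset] at h
  have hKn : G.IsNClique #K K := ⟨hK, rfl⟩
  exact (hKn.insert fun b hb ↦ (G.mem_neighborFinset a b).1 (h hb)).not_cliqueFree hclique

theorem colorable_card_of_list_coloring {f : V → V} (hf : ∀ v ∉ K, f v ∈ colorList G K v)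
    (hne : ∀ u ∉ K, ∀ v ∉ K, G.Adj u v → f u ≠ f v) : G.Colorable #K := by
  let C : V → K := fun v ↦
    if h : v ∈ K then ⟨v, h⟩ else ⟨f v, (mem_sdiff.1 (hf v h)).1⟩
  have hC : ∀ {u v}, G.Adj u v → C u ≠ C v := by
    intro u v huv
    rw [Ne, Subtype.ext_iff]
    by_cases hu : u ∈ K <;> by_cases hv : v ∈ K <;>
      simp only [C, hu, hv, dif_pos, dif_neg, not_false_eq_true]
    · exact huv.ne
    · rintro rfl
      exact (mem_sdiff.1 (hf v hv)).2 (by simpa using huv.symm)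
    · rintro rfl
      exact (mem_sdiff.1 (hf u hu)).2 (by simpa using huv)
    · exact hne u hu v hv huv
  simpa using (SimpleGraph.Coloring.mk C hC).colorable

theorem colorable_card_of_card_compl_le (hcard : #Kᶜ ≤ #K)
    (hne : ∀ a, (colorList G K a).Nonempty)
    (hpair : ∀ a ∉ K, ∀ b ∉ K, a ≠ b →
      2 ≤ #(colorList G K a ∪ colorList G K b))
    (hout : ∀ c ∈ K, #(G.neighborFinset c \ K) ≤ 2) : G.Colorable #K := by
  cases isEmpty_or_nonempty V
  · exact .of_isEmpty _
  have hmiss : ∀ c ∈ K, #{a ∈ Kᶜ | c ∉ colorList G K a} ≤ 2 := fun c hc ↦ by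
    refine (card_le_card fun a ha ↦ ?_).trans (hout c hc)
    simp_all [G.adj_comm]
  obtain ⟨f, hinj, hf⟩ := exists_injOn_mem_of_card_filter_notMem_le hcard (fun a _ ↦ hne a)
    (by simpa using hpair) hmiss
  refine colorable_card_of_list_coloring (f := f) (fun v hv ↦ hf v (mem_compl.2 hv)) ?_
  exact fun u hu v hv huv h ↦ huv.ne (hinj (mem_compl.2 hu) (mem_compl.2 hv) h)

-- The vertex `r` is left out since it is going to share the colour of `s`.
theorem exists_injOn_mem_colorList_of_mem_inter {s r : V} (hsr : s ≠ r) (hr : r ∉ K)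
    (hcard : #Kᶜ ≤ #K + 1) (hne : ∀ a, (colorList G K a).Nonempty)
    (hmerge : (colorList G K s ∩ colorList G K r).Nonempty)
    (hmergepair : ∀ a ∉ K, a ≠ s → a ≠ r → 2 ≤
      #((colorList G K s ∩ colorList G K r) ∪ colorList G K a))
    (hpair : ∀ a ∉ K, ∀ b ∉ K, a ≠ b → a ≠ s → a ≠ r → b ≠ s → b ≠ r →
      2 ≤ #(colorList G K a ∪ colorList G K b))
    (hout : ∀ c ∈ K, #(G.neighborFinset c \ K) ≤ 2) :
    ∃ f : V → V, Set.InjOn f (Kᶜ.erase r) ∧ ∀ a ∈ Kᶜ.erase r,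
      f a ∈ if a = s then colorList G K s ∩ colorList G K r else colorList G K a := by
  have : Nonempty V := ⟨s⟩
  refine exists_injOn_mem_of_card_filter_notMem_le (r := K)
    (by rw [card_erase_of_mem (mem_compl.2 hr)]; omega) (fun a _ ↦ ?_) ?_ fun c hc ↦ ?_
  · split_ifs
    exacts [hmerge, hne a]
  · simp only [mem_erase, mem_compl]
    rintro a ⟨har, ha⟩ b ⟨hbr, hb⟩ hab
    split_ifs with has hbs hbs
    · exact absurd (has.trans hbs.symm) hab
    · exact hmergepair b hb hbs hbr
    · exact union_comm (colorList G K a) _ ▸ hmergepair a ha has har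
    · exact hpair a ha b hb hab has har hbs hbr
  by_cases hcr : r ∈ G.neighborFinset c \ K
  · refine (card_le_card (t := insert s ((G.neighborFinset c \ K).erase r)) fun a ha ↦ ?_).trans ?_
    · by_cases has : a = s <;> simp_all [G.adj_comm]
    · have := card_insert_le s ((G.neighborFinset c \ K).erase r)
      have := card_erase_add_one hcr
      have := hout c hc
      omega
  · refine (card_le_card fun a ha ↦ ?_).trans (hout c hc)
    by_cases has : a = s <;> simp_all [G.adj_comm]

theorem colorable_card_of_not_adj {s r : V} (hs : s ∉ K) (hr : r ∉ K) (hsr : s ≠ r)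
    (hadj : ¬ G.Adj s r) (hcard : #Kᶜ ≤ #K + 1) (hne : ∀ a, (colorList G K a).Nonempty)
    (hmerge : (colorList G K s ∩ colorList G K r).Nonempty)
    (hmergepair : ∀ a ∉ K, a ≠ s → a ≠ r → 2 ≤
      #((colorList G K s ∩ colorList G K r) ∪ colorList G K a))
    (hpair : ∀ a ∉ K, ∀ b ∉ K, a ≠ b → a ≠ s → a ≠ r → b ≠ s → b ≠ r →
      2 ≤ #(colorList G K a ∪ colorList G K b))
    (hout : ∀ c ∈ K, #(G.neighborFinset c \ K) ≤ 2) : G.Colorable #K := by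
  obtain ⟨f, hinj, hf⟩ :=
    exists_injOn_mem_colorList_of_mem_inter hsr hr hcard hne hmerge hmergepair hpair hout
  have hmem : ∀ {v}, v ∉ K → v ≠ r → v ∈ Kᶜ.erase r := fun hv hvr ↦
    mem_erase.2 ⟨hvr, mem_compl.2 hv⟩
  have hfs : f s ∈ colorList G K s ∩ colorList G K r := by simpa using hf s (hmem hs hsr)
  have hne_of_adj : ∀ {w}, w ∉ K → w ≠ r → G.Adj r w → f s ≠ f w := fun hw hwr hrw h ↦
    hadj (hinj (hmem hs hsr) (hmem hw hwr) h ▸ hrw.symm)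
  refine colorable_card_of_list_coloring (f := fun v ↦ if v = r then f s else f v) ?_ ?_
  · intro v hv
    by_cases hvr : v = r
    · subst hvr
      simpa using (mem_inter.1 hfs).2
    by_cases hvs : v = s
    · subst hvs
      simpa [hvr] using (mem_inter.1 hfs).1
    simpa [hvr, hvs] using hf v (hmem hv hvr)
  · intro u hu v hv huv
    by_cases hur : u = r <;> by_cases hvr : v = r
    · exact absurd (hur.trans hvr.symm) huv.ne
    · subst hur
      simpa [hvr] using hne_of_adj hv hvr huv
    · subst hvr
      simpa [hur] using (hne_of_adj hu hur huv.symm).symm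
    · simpa [hur, hvr] using fun h ↦ huv.ne (hinj (hmem hu hur) (hmem hv hvr) h)

theorem eq_singleton_of_card_union_lt_two {α : Type*} [DecidableEq α] {s r : Finset α}
    (hs : s.Nonempty) (hr : r.Nonempty) (h : #(s ∪ r) < 2) : ∃ c, s = {c} ∧ r = {c} := by
  obtain ⟨c, hc⟩ := card_eq_one.1 <| show #(s ∪ r) = 1 by
    have := (hs.mono subset_union_left : (s ∪ r).Nonempty).card_pos
    omega
  exact ⟨c, hs.subset_singleton_iff.1 (hc ▸ subset_union_left),
    hr.subset_singleton_iff.1 (hc ▸ subset_union_right)⟩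

theorem mem_neighborFinset_of_colorList_eq_singleton {a c d : V} (ha : colorList G K a = {c})
    (hd : d ∈ K.erase c) : d ∈ G.neighborFinset a := by
  by_contra h
  have : d ∈ colorList G K a := mem_sdiff.2 ⟨mem_of_mem_erase hd, h⟩
  exact ne_of_mem_erase hd (mem_singleton.1 (ha ▸ this))

theorem not_adj_of_colorList_eq_singleton (hK : G.IsClique K) (hclique : G.CliqueFree (#K + 1))
    {a b c : V} (haK : a ∉ K) (ha : colorList G K a = {c}) (hb : colorList G K b = {c}) :
    ¬ G.Adj a b := by
  intro hab
  have hc : c ∈ K := (mem_sdiff.1 (ha ▸ mem_singleton_self c : c ∈ colorList G K a)).1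
  have hK' : G.IsClique (insert a (K.erase c) : Finset V) := by
    rw [coe_insert]
    exact (hK.subset (coe_subset.2 (erase_subset c K))).insert fun d hd _ ↦
      (G.mem_neighborFinset a d).1 (mem_neighborFinset_of_colorList_eq_singleton ha hd)
  have hcard : #(insert a (K.erase c)) = #K := by
    rw [card_insert_of_notMem fun h ↦ haK (mem_of_mem_erase h), card_erase_add_one hc]
  obtain ⟨d, hd⟩ := colorList_nonempty hK' (hcard ▸ hclique) b
  obtain ⟨hdK, hbd⟩ := mem_sdiff.1 hd
  rcases mem_insert.1 hdK with rfl | hdK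
  · exact hbd ((G.mem_neighborFinset b d).2 hab.symm)
  · exact hbd (mem_neighborFinset_of_colorList_eq_singleton hb hdK)

theorem card_le_card_colorList_add_one {a b c e : V} (haK : a ∉ K) (hbK : b ∉ K) (heK : e ∉ K)
    (hab : a ≠ b) (hea : e ≠ a) (heb : e ≠ b) (ha : colorList G K a = {c})
    (hb : colorList G K b = {c}) (hout : ∀ d ∈ K, #(G.neighborFinset d \ K) ≤ 2) :
    #K ≤ #(colorList G K e) + 1 := by
  have hsub : K.erase c ⊆ colorList G K e := by
    refine fun d hd ↦ mem_sdiff.2 ⟨mem_of_mem_erase hd, fun hed ↦ ?_⟩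
    have hthree : {a, b, e} ⊆ G.neighborFinset d \ K := by
      have had := mem_neighborFinset_of_colorList_eq_singleton ha hd
      have hbd := mem_neighborFinset_of_colorList_eq_singleton hb hd
      simp_all [insert_subset_iff, G.adj_comm]
    have := (card_le_card hthree).trans (hout d (mem_of_mem_erase hd))
    rw [card_eq_three.2 ⟨a, b, e, hab, hea.symm, heb.symm, rfl⟩] at this
    omega
  have := card_le_card hsub
  have := pred_card_le_card_erase (s := K) (a := c)
  omega

theorem colorable_card_of_card_colorList_union_lt_two (hK : G.IsClique K) (hK3 : 3 ≤ #K)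
    (hclique : G.CliqueFree (#K + 1)) (hcard : #Kᶜ ≤ #K + 1) {a b : V} (ha : a ∉ K) (hb : b ∉ K)
    (hab : a ≠ b) (htwin : #(colorList G K a ∪ colorList G K b) < 2)
    (hout : ∀ c ∈ K, #(G.neighborFinset c \ K) ≤ 2) : G.Colorable #K := by
  have hne := colorList_nonempty hK hclique
  obtain ⟨c, hac, hbc⟩ := eq_singleton_of_card_union_lt_two (hne a) (hne b) htwin
  have htwo : ∀ e ∉ K, e ≠ a → e ≠ b → 2 ≤ #(colorList G K e) := fun e he hea heb ↦ by
    have := card_le_card_colorList_add_one ha hb he hab hea heb hac hbc hout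
    omega
  refine colorable_card_of_not_adj ha hb hab
    (not_adj_of_colorList_eq_singleton hK hclique ha hac hbc) hcard hne ?_ ?_ ?_ hout
  · simp [hac, hbc]
  · exact fun e he hea heb ↦ (htwo e he hea heb).trans (card_le_card subset_union_right)
  · exact fun e he _ _ _ hea heb _ _ ↦ (htwo e he hea heb).trans (card_le_card subset_union_left)

theorem card_sdiff_mul_add_le_sum {d : ℕ} {s : V} (hs : s ∉ K)
    (hd : ∀ b ∈ G.neighborFinset s \ K, d ≤ #(G.neighborFinset b ∩ K)) :
    #(G.neighborFinset s ∩ K) + #(G.neighborFinset s \ K) * d ≤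
      ∑ a ∈ Kᶜ, #(G.neighborFinset a ∩ K) := by
  have hsub : insert s (G.neighborFinset s \ K) ⊆ Kᶜ :=
    insert_subset (mem_compl.2 hs) fun v hv ↦ mem_compl.2 (mem_sdiff.1 hv).2
  have hnotMem : s ∉ G.neighborFinset s \ K := by simp
  calc _ ≤ #(G.neighborFinset s ∩ K) +
          ∑ b ∈ G.neighborFinset s \ K, #(G.neighborFinset b ∩ K) :=
        Nat.add_le_add_left (card_nsmul_le_sum _ _ _ hd) _
    _ = ∑ b ∈ insert s (G.neighborFinset s \ K), #(G.neighborFinset b ∩ K) :=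
        by rw [sum_insert hnotMem]
    _ ≤ _ := sum_le_sum_of_subset hsub

theorem TwoK2Free.card_eq_four_of_lt (hfree : TwoK2Free G) (hK : G.IsClique K) (hK4 : 4 ≤ #K)
    (hsum : ∑ a ∈ Kᶜ, #(G.neighborFinset a ∩ K) ≤ #K * 2) {s : V} (hs : s ∉ K)
    (hdeg : #K ≤ G.degree s) (hlt : 2 * #(G.neighborFinset s ∩ K) + 1 < #K) :
    #K = 4 ∧ #(G.neighborFinset s ∩ K) = 1 := by
  obtain ⟨q, hq⟩ : ∃ q, #K = #(G.neighborFinset s ∩ K) + q + 1 :=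
    ⟨#K - #(G.neighborFinset s ∩ K) - 1, by omega⟩
  have hnbr : ∀ b ∈ G.neighborFinset s \ K, q ≤ #(G.neighborFinset b ∩ K) := fun b hb ↦ by
    have := hfree.card_clique_le hK ((G.mem_neighborFinset s b).1 (mem_sdiff.1 hb).1)
    omega
  have hle := (card_sdiff_mul_add_le_sum hs hnbr).trans hsum
  have hout : q + 1 ≤ #(G.neighborFinset s \ K) := by
    have := card_sdiff_add_card_inter (G.neighborFinset s) K
    rw [G.card_neighborFinset_eq_degree] at this
    omega
  have hmul := Nat.mul_le_mul_right q hout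
  have hq2 : q ≤ 2 := by
    by_contra! hq3
    nlinarith
  omega

theorem TwoK2Free.exists_of_card_eq_four (hfree : TwoK2Free G) (hK : G.IsClique K) (hK4 : #K = 4)
    (hsum : ∑ a ∈ Kᶜ, #(G.neighborFinset a ∩ K) ≤ 8)
    (hpos : ∀ a ∉ K, 1 ≤ #(G.neighborFinset a ∩ K)) {s : V} (hs : s ∉ K) (hdeg : 4 ≤ G.degree s)
    (hs1 : #(G.neighborFinset s ∩ K) = 1) :
    #Kᶜ ≤ 4 ∨ #Kᶜ ≤ 5 ∧ ∃ r ∉ K, s ≠ r ∧ ¬ G.Adj s r ∧ #(G.neighborFinset r ∩ K) ≤ 1 := by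
  obtain ⟨B, hB⟩ : ∃ B, B = G.neighborFinset s \ K := ⟨_, rfl⟩
  have hBsub : B ⊆ Kᶜ := fun v hv ↦ mem_compl.2 (mem_sdiff.1 (hB ▸ hv)).2
  have hBcard : 3 ≤ #B := by
    have := card_sdiff_add_card_inter (G.neighborFinset s) K
    rw [← hB, G.card_neighborFinset_eq_degree] at this
    omega
  have hsumB : #B * 2 ≤ ∑ b ∈ B, #(G.neighborFinset b ∩ K) :=
    card_nsmul_le_sum B _ 2 fun b hb ↦ by
      rw [hB, mem_sdiff, G.mem_neighborFinset] at hb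
      have := hfree.card_clique_le hK hb.1
      omega
  have hsumR : #(Kᶜ \ B) * 1 ≤ ∑ a ∈ Kᶜ \ B, #(G.neighborFinset a ∩ K) :=
    card_nsmul_le_sum _ _ _ fun a ha ↦ hpos a (mem_compl.1 (mem_sdiff.1 ha).1)
  have hsplit := sum_sdiff hBsub (f := fun a ↦ #(G.neighborFinset a ∩ K))
  have hcard := card_sdiff_add_card_eq_card hBsub
  rcases Nat.lt_or_ge 4 #Kᶜ with h5 | h4
  · have hsR : s ∈ Kᶜ \ B := by simp [hB, hs]
    obtain ⟨r, hr⟩ : ((Kᶜ \ B).erase s).Nonempty := card_pos.1 <| by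
      rw [card_erase_of_mem hsR]
      omega
    have hsr := add_sum_erase _ (fun a ↦ #(G.neighborFinset a ∩ K)) hsR
    have hrle := single_le_sum (f := fun a ↦ #(G.neighborFinset a ∩ K))
      (fun _ _ ↦ Nat.zero_le _) hr
    simp only [mem_erase, mem_sdiff, mem_compl, hB, SimpleGraph.mem_neighborFinset] at hr
    exact .inr ⟨by omega, r, hr.2.1, hr.1.symm, fun h ↦ hr.2.2 ⟨h, hr.2.1⟩, by omega⟩
  · exact .inl h4

theorem card_compl_le_of_card_le_two_mul_add_one (hK4 : 4 ≤ #K)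
    (hsum : ∑ a ∈ Kᶜ, #(G.neighborFinset a ∩ K) ≤ #K * 2)
    (hlarge : ∀ a ∉ K, #K ≤ 2 * #(G.neighborFinset a ∩ K) + 1) : #Kᶜ ≤ #K := by
  have hle : ∀ d, (∀ a ∉ K, d ≤ #(G.neighborFinset a ∩ K)) → #Kᶜ * d ≤ #K * 2 := fun d hd ↦
    (card_nsmul_le_sum _ _ _ fun a ha ↦ hd a (mem_compl.1 ha)).trans hsum
  have htwo := hle 2 fun a ha ↦ by have := hlarge a ha; omega
  omega

theorem TwoK2Free.card_compl_le_or_exists (hfree : TwoK2Free G) (hK : G.IsClique K) (hK4 : 4 ≤ #K)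
    (hdeg : ∀ v, #K ≤ G.degree v) (hout : ∀ c ∈ K, #(G.neighborFinset c \ K) ≤ 2) :
    #Kᶜ ≤ #K ∨ #Kᶜ ≤ #K + 1 ∧ ∃ s ∉ K, ∃ r ∉ K, s ≠ r ∧ ¬ G.Adj s r ∧
      2 ≤ #(colorList G K s ∩ colorList G K r) := by
  have hsum := sum_compl_card_neighborFinset_inter_le hout
  by_cases! hlarge : ∀ a ∉ K, #K ≤ 2 * #(G.neighborFinset a ∩ K) + 1
  · exact .inl (card_compl_le_of_card_le_two_mul_add_one hK4 hsum hlarge)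
  obtain ⟨s, hs, hslt⟩ := hlarge
  obtain ⟨hKeq, hs1⟩ := hfree.card_eq_four_of_lt hK hK4 hsum hs (hdeg s) hslt
  have hpos : ∀ a ∉ K, 1 ≤ #(G.neighborFinset a ∩ K) := fun a ha ↦ by
    by_contra! halt
    have := hfree.card_eq_four_of_lt hK hK4 hsum ha (hdeg a) (by omega)
    omega
  refine (hfree.exists_of_card_eq_four hK hKeq (by omega) hpos hs (hKeq ▸ hdeg s) hs1).imp
    (by omega) ?_
  rintro ⟨hcard, r, hr, hsr, hadj, hr1⟩
  refine ⟨by omega, s, hs, r, hr, hsr, hadj, ?_⟩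
  have hsL := card_neighborFinset_inter_add_card_colorList (G := G) K s
  have hrL := card_neighborFinset_inter_add_card_colorList (G := G) K r
  have hunion : #(colorList G K s ∪ colorList G K r) ≤ #K :=
    card_le_card (union_subset sdiff_subset sdiff_subset)
  have := card_union_add_card_inter (colorList G K s) (colorList G K r)
  omega

end Clique

open Finset in
theorem TwoK2Free.colorable_card_of_isClique {V : Type*} [Fintype V] {G : SimpleGraph V}
    [DecidableRel G.Adj] (hfree : TwoK2Free G) {K : Finset V} (hK : G.IsClique K) (hK4 : 4 ≤ #K)
    (hclique : G.CliqueFree (#K + 1)) (hdeg_ge : ∀ v, #K ≤ G.degree v)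
    (hdeg_le : ∀ v, G.degree v ≤ #K + 1) : G.Colorable #K := by
  classical
  have hout : ∀ c ∈ K, #(G.neighborFinset c \ K) ≤ 2 := fun c hc ↦ by
    have := card_neighborFinset_sdiff_add_card hK hc
    have := hdeg_le c
    omega
  have hne := colorList_nonempty hK hclique
  have hstructure := hfree.card_compl_le_or_exists hK hK4 hdeg_ge hout
  by_cases! hpair : ∀ a ∉ K, ∀ b ∉ K, a ≠ b → 2 ≤ #(colorList G K a ∪ colorList G K b)
  · rcases hstructure with hcard | ⟨hcard, s, hs, r, hr, hsr, hadj, htwo⟩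
    · exact colorable_card_of_card_compl_le hcard hne hpair hout
    · exact colorable_card_of_not_adj hs hr hsr hadj hcard hne (card_pos.1 (by omega))
        (fun a _ _ _ ↦ htwo.trans (card_le_card subset_union_left))
        (fun a ha b hb hab _ _ _ _ ↦ hpair a ha b hb hab) hout
  · obtain ⟨a, ha, b, hb, hab, htwin⟩ := hpair
    have hcard : #Kᶜ ≤ #K + 1 := by
      rcases hstructure with h | h
      exacts [h.trans (Nat.le_succ _), h.1]
    exact colorable_card_of_card_colorList_union_lt_two hK (by omega) hclique hcard ha hb hab
      htwin hout

/-! ### Colouring around a triangle -/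

section Triangle

variable {V : Type*} {G : SimpleGraph V}

/-- The private neighbours of the vertex `t i` of the triangle `t`: the vertices, necessarily
outside the triangle, whose only neighbour in it is `t i`. -/
def privateNbrs (t : (⊤ : SimpleGraph (Fin 3)) →g G) (i : Fin 3) : Set V :=
  {v | ∀ j, G.Adj v (t j) ↔ j = i}

/-- The replacements of the vertex `t i` of the triangle `t`: the vertices that form a triangle
with the other two vertices of `t` and are not adjacent to `t i`. The vertex `t i` is one of
them. -/
def replacements (t : (⊤ : SimpleGraph (Fin 3)) →g G) (i : Fin 3) : Set V :=
  {v | ∀ j, G.Adj v (t j) ↔ j ≠ i}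

theorem isIndepSet_union_iff {s r : Set V} : G.IsIndepSet (s ∪ r) ↔
    G.IsIndepSet s ∧ G.IsIndepSet r ∧ ∀ a ∈ s, ∀ b ∈ r, ¬ G.Adj a b := by
  constructor
  · exact fun h ↦ ⟨h.mono Set.subset_union_left, h.mono Set.subset_union_right,
      fun a ha b hb hab ↦ h (.inl ha) (.inr hb) hab.ne hab⟩
  · rintro ⟨hs, hr, h⟩ a (ha | ha) b (hb | hb) hne hab
    exacts [hs ha hb hne hab, h a ha b hb hab, h b hb a ha hab.symm, hr ha hb hne hab]

theorem isIndepSet_insert {a : V} {s : Set V} (hs : G.IsIndepSet s)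
    (ha : ∀ b ∈ s, ¬ G.Adj a b) : G.IsIndepSet (insert a s) :=
  isIndepSet_union_iff.2 ⟨Set.pairwise_singleton _ _, hs, by rintro _ rfl; exact ha⟩

theorem isIndepSet_pair {a b : V} (hab : ¬ G.Adj a b) : G.IsIndepSet {a, b} :=
  isIndepSet_insert (Set.pairwise_singleton _ _) (by rintro _ rfl; exact hab)

theorem exists_adj_of_not_isIndepSet_union {s r : Set V} (hs : G.IsIndepSet s)
    (hr : G.IsIndepSet r) (h : ¬ G.IsIndepSet (s ∪ r)) : ∃ a ∈ s, ∃ b ∈ r, G.Adj a b := by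
  by_contra! hnot
  exact h (isIndepSet_union_iff.2 ⟨hs, hr, hnot⟩)

theorem not_cliqueFree_four_of_adj {a b c d : V} (hab : G.Adj a b) (hac : G.Adj a c)
    (had : G.Adj a d) (hbc : G.Adj b c) (hbd : G.Adj b d) (hcd : G.Adj c d) :
    ¬ G.CliqueFree 4 := by
  classical
  have hbcd : G.IsNClique 3 {b, c, d} := SimpleGraph.is3Clique_triple_iff.2 ⟨hbc, hbd, hcd⟩
  exact (hbcd.insert (a := a) (by simp [hab, hac, had])).not_cliqueFree

variable {t : (⊤ : SimpleGraph (Fin 3)) →g G} {i j k : Fin 3}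

theorem exists_ne_and_ne (i : Fin 3) : ∃ j k, i ≠ j ∧ i ≠ k ∧ j ≠ k := by
  decide +revert

theorem adj_triangle (hij : i ≠ j) : G.Adj (t i) (t j) :=
  t.map_adj hij

theorem apply_mem_replacements : t i ∈ replacements t i := fun j ↦ by
  rcases eq_or_ne j i with rfl | h
  · simp
  · simp [h, adj_triangle h.symm]

variable (t) in
theorem TwoK2Free.isIndepSet_privateNbrs (hfree : TwoK2Free G) (i : Fin 3) :
    G.IsIndepSet (privateNbrs t i) := by
  obtain ⟨j, k, hij, hik, hjk⟩ := exists_ne_and_ne i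
  exact hfree.isIndepSet_of_adj (adj_triangle hjk) (fun v hv h ↦ hij ((hv j).1 h.symm).symm)
    fun v hv h ↦ hik ((hv k).1 h.symm).symm

theorem not_adj_of_mem_privateNbrs {v : V} (hv : v ∈ privateNbrs t i) (hij : i ≠ j) :
    ¬ G.Adj (t j) v :=
  fun h ↦ hij ((hv j).1 h.symm).symm

theorem adj_of_mem_privateNbrs {v : V} (hv : v ∈ privateNbrs t i) : G.Adj (t i) v :=
  ((hv i).2 rfl).symm

theorem adj_of_mem_replacements {v : V} (hv : v ∈ replacements t i) (hij : i ≠ j) :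
    G.Adj (t j) v :=
  ((hv j).2 hij.symm).symm

theorem not_adj_of_mem_replacements {v : V} (hv : v ∈ replacements t i) : ¬ G.Adj (t i) v :=
  fun h ↦ (hv i).1 h.symm rfl

variable (t) in
theorem TwoK2Free.isIndepSet_insert_privateNbrs (hfree : TwoK2Free G) (hij : i ≠ j) :
    G.IsIndepSet (insert (t j) (privateNbrs t i)) :=
  isIndepSet_insert (hfree.isIndepSet_privateNbrs t i) fun _ hv ↦ not_adj_of_mem_privateNbrs hv hij

variable (t) in
theorem isIndepSet_replacements (hclique : G.CliqueFree 4) (i : Fin 3) :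
    G.IsIndepSet (replacements t i) := by
  obtain ⟨j, k, hij, hik, hjk⟩ := exists_ne_and_ne i
  intro u hu v hv _ huv
  exact not_cliqueFree_four_of_adj (adj_triangle hjk) (adj_of_mem_replacements hu hij)
    (adj_of_mem_replacements hv hij) (adj_of_mem_replacements hu hik)
    (adj_of_mem_replacements hv hik) huv hclique

theorem not_adj_of_mem_privateNbrs_of_mem_replacements (hclique : G.CliqueFree 4)
    (hik : i ≠ k) (hjk : j ≠ k) {c x y : V} (hc : c ∈ privateNbrs t k)
    (hx : x ∈ replacements t i) (hy : y ∈ replacements t j) (hcx : G.Adj c x)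
    (hcy : G.Adj c y) : ¬ G.Adj x y :=
  fun hxy ↦ not_cliqueFree_four_of_adj (adj_of_mem_privateNbrs hc)
    (adj_of_mem_replacements hx hik) (adj_of_mem_replacements hy hjk) hcx hcy hxy hclique

theorem exists_mem_privateNbrs_or_mem_replacements (hclique : G.CliqueFree 4) {v : V}
    (hv : ∃ i, G.Adj v (t i)) : ∃ i, v ∈ privateNbrs t i ∨ v ∈ replacements t i := by
  classical
  have hnot : ¬ ∀ i, G.Adj v (t i) := fun h ↦
    not_cliqueFree_four_of_adj (h 0) (h 1) (h 2) (adj_triangle (by decide))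
      (adj_triangle (by decide)) (adj_triangle (by decide)) hclique
  have key : ∀ p : Fin 3 → Bool, (∃ i, p i) → (¬ ∀ i, p i) →
      ∃ i, (∀ j, p j ↔ j = i) ∨ ∀ j, p j ↔ j ≠ i := by decide
  simpa [privateNbrs, replacements] using
    key (fun i ↦ decide (G.Adj v (t i))) (by simpa using hv) (by simpa using hnot)

theorem ncard_privateNbrs_add_le [Finite V] {d : ℕ} (hdeg : (G.neighborSet (t i)).ncard ≤ d)
    (hij : i ≠ j) (hik : i ≠ k) (hjk : j ≠ k) :
    (privateNbrs t i).ncard + (replacements t j).ncard + (replacements t k).ncard ≤ d := by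
  have hAB : Disjoint (privateNbrs t i) (replacements t j) :=
    Set.disjoint_left.2 fun v hv hv' ↦
      not_adj_of_mem_privateNbrs hv hik (adj_of_mem_replacements hv' hjk)
  have hABC : Disjoint (privateNbrs t i ∪ replacements t j) (replacements t k) := by
    refine Set.disjoint_left.2 ?_
    rintro v (hv | hv) hv'
    · exact not_adj_of_mem_privateNbrs hv hij (adj_of_mem_replacements hv' hjk.symm)
    · exact not_adj_of_mem_replacements hv (adj_of_mem_replacements hv' hjk.symm)
  rw [← Set.ncard_union_eq hAB, ← Set.ncard_union_eq hABC]
  refine (Set.ncard_le_ncard ?_).trans hdeg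
  rintro v ((hv | hv) | hv)
  exacts [adj_of_mem_privateNbrs hv, adj_of_mem_replacements hv hij.symm,
    adj_of_mem_replacements hv hik.symm]

theorem TwoK2Free.exists_mem_replacements_of_adj (hfree : TwoK2Free G) (hclique : G.CliqueFree 4)
    {w v : V} (hw : ∀ i, ¬ G.Adj w (t i)) (hwv : G.Adj w v) :
    ∃ i, v ∈ replacements t i \ {t i} := by
  have hpair : ∀ {j k}, j ≠ k → G.Adj v (t j) ∨ G.Adj v (t k) := fun {j k} hjk ↦ by
    have := hfree.adj_of_adj hwv (adj_triangle (t := t) hjk)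
    simpa [hw] using this
  obtain ⟨i, hv | hv⟩ := exists_mem_privateNbrs_or_mem_replacements hclique (t := t) (v := v)
    ((hpair (zero_ne_one)).elim (⟨_, ·⟩) (⟨_, ·⟩))
  · obtain ⟨j, k, hij, hik, hjk⟩ := exists_ne_and_ne i
    rcases hpair hjk with h | h
    · exact absurd h.symm (not_adj_of_mem_privateNbrs hv hij)
    · exact absurd h.symm (not_adj_of_mem_privateNbrs hv hik)
  · refine ⟨i, hv, ?_⟩
    rintro rfl
    exact hw i hwv

theorem sum_ncard_privateNbrs_add_le [Finite V] {d : ℕ}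
    (hdeg : ∀ i, (G.neighborSet (t i)).ncard ≤ d) :
    ∑ i, (privateNbrs t i).ncard + 2 * ∑ i, (replacements t i).ncard ≤ 3 * d := by
  have h0 := ncard_privateNbrs_add_le (hdeg 0) (j := 1) (k := 2) (by decide) (by decide) (by decide)
  have h1 := ncard_privateNbrs_add_le (hdeg 1) (j := 0) (k := 2) (by decide) (by decide) (by decide)
  have h2 := ncard_privateNbrs_add_le (hdeg 2) (j := 0) (k := 1) (by decide) (by decide) (by decide)
  simp only [Fin.sum_univ_three]
  omega

theorem TwoK2Free.ncard_neighborSet_add_three_le [Finite V] (hfree : TwoK2Free G)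
    (hclique : G.CliqueFree 4) {w : V} (hw : ∀ i, ¬ G.Adj w (t i)) :
    (G.neighborSet w).ncard + 3 ≤ ∑ i, (replacements t i).ncard := by
  have hsub : G.neighborSet w ⊆ ⋃ i, replacements t i \ {t i} := fun v hv ↦
    Set.mem_iUnion.2 (hfree.exists_mem_replacements_of_adj hclique hw hv)
  calc (G.neighborSet w).ncard + 3
      ≤ ∑ i, (replacements t i \ {t i}).ncard + 3 :=
        Nat.add_le_add_right
          ((Set.ncard_le_ncard hsub).trans (Set.ncard_iUnion_le_of_fintype _)) 3
    _ = ∑ i, ((replacements t i \ {t i}).ncard + 1) := by simp [Finset.sum_add_distrib]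
    _ = ∑ i, (replacements t i).ncard := Finset.sum_congr rfl fun i _ ↦
        Set.ncard_sdiff_singleton_add_one apply_mem_replacements

theorem TwoK2Free.isIndepSet_forall_notMem_replacements (hfree : TwoK2Free G)
    (hclique : G.CliqueFree 4) (hsub : (⋃ i, privateNbrs t i).Subsingleton) :
    G.IsIndepSet {v | ∀ i, v ∉ replacements t i} := by
  have hprivate : ∀ {u v}, (∀ i, v ∉ replacements t i) → (∀ i, u ∉ replacements t i) →
      G.Adj u v → u ∈ ⋃ i, privateNbrs t i := fun {u v} hv hu huv ↦ by
    have hdom : ∃ i, G.Adj u (t i) := by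
      by_contra! h
      obtain ⟨i, hi, -⟩ := hfree.exists_mem_replacements_of_adj hclique h huv
      exact hv i hi
    obtain ⟨i, hi | hi⟩ := exists_mem_privateNbrs_or_mem_replacements hclique hdom
    · exact Set.mem_iUnion.2 ⟨i, hi⟩
    · exact absurd hi (hu i)
  exact fun u hu v hv hne huv ↦ hne (hsub (hprivate hv hu huv) (hprivate hu hv huv.symm))

theorem TwoK2Free.colorable_four_of_not_dominating [Finite V] (hfree : TwoK2Free G)
    (hclique : G.CliqueFree 4) (hdeg : ∀ i, (G.neighborSet (t i)).ncard ≤ 5) {w : V}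
    (hw : ∀ i, ¬ G.Adj w (t i)) (hdegw : 4 ≤ (G.neighborSet w).ncard) : G.Colorable 4 := by
  have hone : (⋃ i, privateNbrs t i).ncard ≤ 1 := by
    have := Set.ncard_iUnion_le_of_fintype (privateNbrs t)
    have := sum_ncard_privateNbrs_add_le hdeg
    have := hfree.ncard_neighborSet_add_three_le hclique hw
    omega
  have hrepl := isIndepSet_replacements t hclique
  refine colorable_four_of_isIndepSet (hrepl 0) (hrepl 1) (hrepl 2)
    (hfree.isIndepSet_forall_notMem_replacements (t := t) hclique
      (Set.ncard_le_one_iff_subsingleton.1 hone)) fun v ↦ ?_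
  by_cases hv : ∃ i, v ∈ replacements t i
  · obtain ⟨i, hi⟩ := hv
    fin_cases i <;> tauto
  · exact .inr (.inr (.inr (not_exists.1 hv)))

theorem exists_forall_eq_or_eq_or_eq (hij : i ≠ j) : ∃ k, ∀ q, q = i ∨ q = j ∨ q = k := by
  decide +revert

theorem eq_or_eq_or_eq_of_ne (hij : i ≠ j) (hik : i ≠ k) (hjk : j ≠ k) (q : Fin 3) :
    q = i ∨ q = j ∨ q = k := by
  decide +revert

theorem forall_of_privateNbrs_of_replacements (hclique : G.CliqueFree 4)
    (hdom : ∀ v, ∃ i, G.Adj v (t i)) (hij : i ≠ j) (hik : i ≠ k) (hjk : j ≠ k) {p : V → Prop}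
    (hAi : ∀ v ∈ privateNbrs t i, p v) (hAj : ∀ v ∈ privateNbrs t j, p v)
    (hAk : ∀ v ∈ privateNbrs t k, p v) (hBi : ∀ v ∈ replacements t i, p v)
    (hBj : ∀ v ∈ replacements t j, p v) (hBk : ∀ v ∈ replacements t k, p v) (v : V) : p v := by
  obtain ⟨q, hq | hq⟩ := exists_mem_privateNbrs_or_mem_replacements hclique (hdom v) <;>
    rcases eq_or_eq_or_eq_of_ne hij hik hjk q with rfl | rfl | rfl
  exacts [hAi v hq, hAj v hq, hAk v hq, hBi v hq, hBj v hq, hBk v hq]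

theorem TwoK2Free.colorable_four_of_isIndepSet_union_union (hfree : TwoK2Free G)
    (hclique : G.CliqueFree 4) (hdom : ∀ v, ∃ i, G.Adj v (t i)) {l : Fin 3} (hij : i ≠ j)
    (hkl : k ≠ l)
    (hik : G.IsIndepSet (privateNbrs t i ∪ replacements t k))
    (hjl : G.IsIndepSet (privateNbrs t j ∪ replacements t l)) : G.Colorable 4 := by
  obtain ⟨p, hp⟩ := exists_forall_eq_or_eq_or_eq hij
  obtain ⟨r, hr⟩ := exists_forall_eq_or_eq_or_eq hkl
  refine colorable_four_of_isIndepSet hik hjl (hfree.isIndepSet_privateNbrs t p)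
    (isIndepSet_replacements t hclique r) fun v ↦ ?_
  obtain ⟨q, hq | hq⟩ := exists_mem_privateNbrs_or_mem_replacements hclique (hdom v)
  · rcases hp q with rfl | rfl | rfl <;> simp [hq]
  · rcases hr q with rfl | rfl | rfl <;> simp [hq]

theorem TwoK2Free.colorable_four_of_forall_exists_isIndepSet_union (hfree : TwoK2Free G)
    (hclique : G.CliqueFree 4) (hdom : ∀ v, ∃ i, G.Adj v (t i))
    (h : ∀ i, ∃ j, i ≠ j ∧ G.IsIndepSet (privateNbrs t i ∪ replacements t j)) :
    G.Colorable 4 := by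
  obtain ⟨j, hij, hAB⟩ := h 0
  obtain ⟨k, hjk, hAB'⟩ := h j
  exact hfree.colorable_four_of_isIndepSet_union_union hclique hdom hij hjk hAB hAB'

theorem eq_of_mem_privateNbrs_of_mem_replacements [Finite V]
    (hdeg : (G.neighborSet (t i)).ncard ≤ 5) (hij : i ≠ j) (hik : i ≠ k) (hjk : j ≠ k)
    {a y z : V} (ha : a ∈ privateNbrs t i) (hy : y ∈ replacements t j) (hyj : y ≠ t j)
    (hz : z ∈ replacements t k) (hzk : z ≠ t k) :
    privateNbrs t i = {a} ∧ replacements t j = {t j, y} ∧ replacements t k = {t k, z} := by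
  have hA : {a} ⊆ privateNbrs t i := Set.singleton_subset_iff.2 ha
  have hB : {t j, y} ⊆ replacements t j := Set.pair_subset apply_mem_replacements hy
  have hC : {t k, z} ⊆ replacements t k := Set.pair_subset apply_mem_replacements hz
  have hcard := ncard_privateNbrs_add_le hdeg hij hik hjk
  have hA' := Set.ncard_le_ncard hA
  have hB' := Set.ncard_le_ncard hB
  have hC' := Set.ncard_le_ncard hC
  rw [Set.ncard_singleton] at hA'
  rw [Set.ncard_pair hyj.symm] at hB'
  rw [Set.ncard_pair hzk.symm] at hC'
  refine ⟨(Set.eq_of_subset_of_ncard_le hA ?_).symm, (Set.eq_of_subset_of_ncard_le hB ?_).symm,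
    (Set.eq_of_subset_of_ncard_le hC ?_).symm⟩
  · rw [Set.ncard_singleton]
    omega
  · rw [Set.ncard_pair hyj.symm]
    omega
  · rw [Set.ncard_pair hzk.symm]
    omega

theorem TwoK2Free.exists_adj_replacements_of_not_isIndepSet_union (hfree : TwoK2Free G)
    (hclique : G.CliqueFree 4) (hij : i ≠ j)
    (h : ¬ G.IsIndepSet (privateNbrs t i ∪ replacements t j)) :
    ∃ a ∈ privateNbrs t i, ∃ y ∈ replacements t j, y ≠ t j ∧ G.Adj a y := by
  obtain ⟨a, ha, y, hy, hay⟩ := exists_adj_of_not_isIndepSet_union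
    (hfree.isIndepSet_privateNbrs t i) (isIndepSet_replacements t hclique j) h
  refine ⟨a, ha, y, hy, ?_, hay⟩
  rintro rfl
  exact not_adj_of_mem_privateNbrs ha hij hay.symm

theorem TwoK2Free.exists_eq_of_forall_not_isIndepSet_union [Finite V] (hfree : TwoK2Free G)
    (hclique : G.CliqueFree 4) (hdeg : (G.neighborSet (t i)).ncard ≤ 5)
    (hij : i ≠ j) (hik : i ≠ k) (hjk : j ≠ k)
    (h : ∀ l, i ≠ l → ¬ G.IsIndepSet (privateNbrs t i ∪ replacements t l)) :
    ∃ a y z, privateNbrs t i = {a} ∧ replacements t j = {t j, y} ∧ replacements t k = {t k, z} ∧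
      y ≠ t j ∧ z ≠ t k ∧ G.Adj a y ∧ G.Adj a z := by
  obtain ⟨a, ha, y, hy, hyj, hay⟩ :=
    hfree.exists_adj_replacements_of_not_isIndepSet_union hclique hij (h j hij)
  obtain ⟨a', ha', z, hz, hzk, haz⟩ :=
    hfree.exists_adj_replacements_of_not_isIndepSet_union hclique hik (h k hik)
  obtain ⟨hA, hB, hC⟩ :=
    eq_of_mem_privateNbrs_of_mem_replacements hdeg hij hik hjk ha hy hyj hz hzk
  rw [hA, Set.mem_singleton_iff] at ha'
  exact ⟨a, y, z, hA, hB, hC, hyj, hzk, hay, ha' ▸ haz⟩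

theorem TwoK2Free.colorable_four_of_isIndepSet_replacements_union (hfree : TwoK2Free G)
    (hclique : G.CliqueFree 4) (hdom : ∀ v, ∃ i, G.Adj v (t i))
    (hij : i ≠ j) (hik : i ≠ k) (hjk : j ≠ k) {y z : V}
    (hBj : replacements t j = {t j, y}) (hBk : replacements t k = {t k, z})
    (h : G.IsIndepSet ({y, z} ∪ replacements t i \ {t i})) : G.Colorable 4 := by
  refine colorable_four_of_isIndepSet h (hfree.isIndepSet_insert_privateNbrs t hij)
    (hfree.isIndepSet_insert_privateNbrs t hjk) (hfree.isIndepSet_insert_privateNbrs t hik.symm)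
    (forall_of_privateNbrs_of_replacements hclique hdom hij hik hjk ?_ ?_ ?_ (fun v _ ↦ ?_) ?_ ?_)
  case refine_4 => by_cases hv : v = t i <;> simp [*]
  all_goals simp +contextual [hBj, hBk]

theorem TwoK2Free.colorable_four_of_isIndepSet_privateNbrs_union_replacements (hfree : TwoK2Free G)
    (hclique : G.CliqueFree 4) (hdom : ∀ v, ∃ i, G.Adj v (t i))
    (hij : i ≠ j) (hik : i ≠ k) (hjk : j ≠ k) {y z : V}
    (hBj : replacements t j = {t j, y}) (hBk : replacements t k = {t k, z}) (hyz : ¬ G.Adj y z)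
    (h : G.IsIndepSet (privateNbrs t k ∪ replacements t i)) : G.Colorable 4 := by
  refine colorable_four_of_isIndepSet h (isIndepSet_pair hyz)
    (hfree.isIndepSet_insert_privateNbrs t hij) (hfree.isIndepSet_insert_privateNbrs t hjk)
    (forall_of_privateNbrs_of_replacements hclique hdom hij hik hjk ?_ ?_ ?_ ?_ ?_ ?_) <;>
    simp +contextual [hBj, hBk]

theorem TwoK2Free.colorable_four_of_isIndepSet_privateNbrs_union (hfree : TwoK2Free G)
    (hclique : G.CliqueFree 4) (hdom : ∀ v, ∃ i, G.Adj v (t i))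
    (hij : i ≠ j) (hik : i ≠ k) (hjk : j ≠ k) {y z : V}
    (hBj : replacements t j = {t j, y}) (hBk : replacements t k = {t k, z}) (hyz : ¬ G.Adj y z)
    (h : G.IsIndepSet (privateNbrs t i ∪ privateNbrs t j)) : G.Colorable 4 := by
  have hAA : G.IsIndepSet (insert (t k) (privateNbrs t i ∪ privateNbrs t j)) :=
    isIndepSet_insert h <| by
      rintro v (hv | hv)
      exacts [not_adj_of_mem_privateNbrs hv hik, not_adj_of_mem_privateNbrs hv hjk]
  refine colorable_four_of_isIndepSet hAA (isIndepSet_pair hyz)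
    (isIndepSet_replacements t hclique i) (hfree.isIndepSet_insert_privateNbrs t hjk.symm)
    (forall_of_privateNbrs_of_replacements hclique hdom hij hik hjk ?_ ?_ ?_ ?_ ?_ ?_) <;>
    simp +contextual [hBj, hBk]

theorem TwoK2Free.colorable_four_of_eq_of_adj (hfree : TwoK2Free G) (hclique : G.CliqueFree 4)
    (hdom : ∀ v, ∃ i, G.Adj v (t i)) (hij : i ≠ j) (hik : i ≠ k) (hjk : j ≠ k)
    {a b c x y z : V} (hAi : privateNbrs t i = {a}) (hAj : privateNbrs t j = {b})
    (hAk : privateNbrs t k = {c}) (hBi : replacements t i = {t i, x})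
    (hBj : replacements t j = {t j, y}) (hBk : replacements t k = {t k, z})
    (hab : G.Adj a b) (hac : G.Adj a c) (hbx : G.Adj b x) (hcx : G.Adj c x) (hxy : G.Adj x y) :
    G.Colorable 4 := by
  have hb : b ∈ privateNbrs t j := hAj ▸ rfl
  have hc : c ∈ privateNbrs t k := hAk ▸ rfl
  have hx : x ∈ replacements t i := hBi ▸ .inr rfl
  have hy : y ∈ replacements t j := hBj ▸ .inr rfl
  have hz : z ∈ replacements t k := hBk ▸ .inr rfl
  have hcy : ¬ G.Adj c y := fun hcy ↦
    not_adj_of_mem_privateNbrs_of_mem_replacements hclique hik hjk hc hx hy hcx hcy hxy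
  have hAkBj : G.IsIndepSet (privateNbrs t k ∪ replacements t j) := by
    refine isIndepSet_union_iff.2 ⟨hfree.isIndepSet_privateNbrs t k,
      isIndepSet_replacements t hclique j, ?_⟩
    simpa [hAk, hBj, hcy] using fun h ↦ not_adj_of_mem_privateNbrs hc hjk.symm h.symm
  have hcover {p : V → Prop} :=
    forall_of_privateNbrs_of_replacements (p := p) hclique hdom hij hik hjk
  by_cases hax : G.Adj a x
  · have hbc : ¬ G.Adj b c := fun hbc ↦
      not_cliqueFree_four_of_adj hab hac hax hbc hbx hcx hclique
    by_cases hbz : G.Adj b z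
    · have hxz : ¬ G.Adj x z :=
        not_adj_of_mem_privateNbrs_of_mem_replacements hclique hij hjk.symm hb hx hz hbx hbz
      have hAjAk : G.IsIndepSet (insert (t i) (privateNbrs t j ∪ privateNbrs t k)) := by
        rw [hAj, hAk, Set.singleton_union]
        refine isIndepSet_insert (isIndepSet_pair hbc) ?_
        rintro v (rfl | rfl)
        exacts [not_adj_of_mem_privateNbrs hb hij.symm, not_adj_of_mem_privateNbrs hc hik.symm]
      refine colorable_four_of_isIndepSet (isIndepSet_pair hxz) hAjAk
        (isIndepSet_replacements t hclique j) (hfree.isIndepSet_insert_privateNbrs t hik)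
        (hcover ?_ ?_ ?_ ?_ ?_ ?_) <;> simp +contextual [hBi, hBk]
    · refine colorable_four_of_isIndepSet (isIndepSet_pair hbz) hAkBj
        (hfree.isIndepSet_insert_privateNbrs t hik) (isIndepSet_replacements t hclique i)
        (hcover ?_ ?_ ?_ ?_ ?_ ?_) <;> simp +contextual [hAj, hBk]
  · refine colorable_four_of_isIndepSet (isIndepSet_pair hax) hAkBj
      (isIndepSet_replacements t hclique k) (hfree.isIndepSet_insert_privateNbrs t hij.symm)
      (hcover ?_ ?_ ?_ ?_ ?_ ?_) <;> simp +contextual [hAi, hBi]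

theorem TwoK2Free.exists_eq_of_not_colorable_four [Finite V] (hfree : TwoK2Free G)
    (hclique : G.CliqueFree 4) (hdeg : (G.neighborSet (t j)).ncard ≤ 5)
    (hdom : ∀ v, ∃ i, G.Adj v (t i)) (hij : i ≠ j) (hik : i ≠ k) (hjk : j ≠ k) {a x y z : V}
    (hAi : privateNbrs t i = {a}) (hBj : replacements t j = {t j, y})
    (hBk : replacements t k = {t k, z}) (hyz : ¬ G.Adj y z) (hzk : z ≠ t k)
    (hx : x ∈ replacements t i) (hxi : x ≠ t i) (hcol : ¬ G.Colorable 4) :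
    ∃ b, privateNbrs t j = {b} ∧ replacements t i = {t i, x} ∧ G.Adj a b ∧ G.Adj b x := by
  have hz : z ∈ replacements t k := hBk ▸ .inr rfl
  obtain ⟨a', ha', b, hb, hab⟩ := exists_adj_of_not_isIndepSet_union
    (hfree.isIndepSet_privateNbrs t i) (hfree.isIndepSet_privateNbrs t j)
    (mt (hfree.colorable_four_of_isIndepSet_privateNbrs_union hclique hdom hij hik hjk hBj hBk hyz)
      hcol)
  obtain ⟨b', hb', x', hx', hx'i, hbx⟩ := hfree.exists_adj_replacements_of_not_isIndepSet_union
    hclique hij.symm (mt (hfree.colorable_four_of_isIndepSet_privateNbrs_union_replacements hclique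
      hdom hik hij hjk.symm hBk hBj fun h ↦ hyz h.symm) hcol)
  obtain ⟨hAj, hBi, -⟩ :=
    eq_of_mem_privateNbrs_of_mem_replacements hdeg hij.symm hjk hik hb hx hxi hz hzk
  rw [hAi, Set.mem_singleton_iff] at ha'
  rw [hAj, Set.mem_singleton_iff] at hb'
  rw [hBi, Set.mem_insert_iff, Set.mem_singleton_iff, or_iff_right hx'i] at hx'
  exact ⟨b, hAj, hBi, ha' ▸ hab, hb' ▸ hx' ▸ hbx⟩

theorem TwoK2Free.colorable_four_of_forall_not_isIndepSet_union [Finite V] (hfree : TwoK2Free G)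
    (hclique : G.CliqueFree 4) (hdeg : ∀ i, (G.neighborSet (t i)).ncard ≤ 5)
    (hdom : ∀ v, ∃ i, G.Adj v (t i)) (hij : i ≠ j) (hik : i ≠ k) (hjk : j ≠ k)
    (h : ∀ l, i ≠ l → ¬ G.IsIndepSet (privateNbrs t i ∪ replacements t l)) : G.Colorable 4 := by
  obtain ⟨a, y, z, hAi, hBj, hBk, hyj, hzk, hay, haz⟩ :=
    hfree.exists_eq_of_forall_not_isIndepSet_union hclique (hdeg i) hij hik hjk h
  have ha : a ∈ privateNbrs t i := hAi ▸ rfl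
  have hy : y ∈ replacements t j := hBj ▸ .inr rfl
  have hz : z ∈ replacements t k := hBk ▸ .inr rfl
  have hyz : ¬ G.Adj y z :=
    not_adj_of_mem_privateNbrs_of_mem_replacements hclique hij.symm hik.symm ha hy hz hay haz
  by_contra hcol
  obtain ⟨p, hp, x, ⟨hx, hxi⟩, hpx⟩ := exists_adj_of_not_isIndepSet_union (isIndepSet_pair hyz)
    ((isIndepSet_replacements t hclique i).mono Set.sdiff_subset)
    (mt (hfree.colorable_four_of_isIndepSet_replacements_union hclique hdom hij hik hjk hBj hBk)
      hcol)
  have hyz' : ¬ G.Adj z y := fun h ↦ hyz h.symm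
  obtain ⟨b, hAj, hBi, hab, hbx⟩ := hfree.exists_eq_of_not_colorable_four hclique (hdeg j) hdom
    hij hik hjk hAi hBj hBk hyz hzk hx hxi hcol
  obtain ⟨c, hAk, -, hac, hcx⟩ := hfree.exists_eq_of_not_colorable_four hclique (hdeg k) hdom
    hik hij hjk.symm hAi hBk hBj hyz' hyj hx hxi hcol
  rcases hp with rfl | rfl
  · exact hcol (hfree.colorable_four_of_eq_of_adj hclique hdom hij hik hjk hAi hAj hAk hBi hBj hBk
      hab hac hbx hcx hpx.symm)
  · exact hcol (hfree.colorable_four_of_eq_of_adj hclique hdom hik hij hjk.symm hAi hAk hAj hBi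
      hBk hBj hac hab hcx hbx hpx.symm)

theorem TwoK2Free.colorable_four_of_triangle [Finite V] (hfree : TwoK2Free G)
    (hclique : G.CliqueFree 4) (hdeg_ge : ∀ v, 4 ≤ (G.neighborSet v).ncard)
    (hdeg_le : ∀ v, (G.neighborSet v).ncard ≤ 5)
    (t : (⊤ : SimpleGraph (Fin 3)) →g G) : G.Colorable 4 := by
  by_cases hdom : ∀ v, ∃ i, G.Adj v (t i)
  · by_cases htarget :
        ∀ i, ∃ j, i ≠ j ∧ G.IsIndepSet (privateNbrs t i ∪ replacements t j)
    · exact hfree.colorable_four_of_forall_exists_isIndepSet_union hclique hdom htarget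
    · push Not at htarget
      obtain ⟨i, hi⟩ := htarget
      obtain ⟨j, k, hij, hik, hjk⟩ := exists_ne_and_ne i
      exact hfree.colorable_four_of_forall_not_isIndepSet_union hclique (fun l ↦ hdeg_le (t l))
        hdom hij hik hjk hi
  · push Not at hdom
    obtain ⟨w, hw⟩ := hdom
    exact hfree.colorable_four_of_not_dominating hclique (fun i ↦ hdeg_le (t i)) hw (hdeg_ge w)

end Triangle

/-! ### Reduction to a critical induced subgraph -/

section Main

variable {V : Type*} {G : SimpleGraph V}

theorem TwoK2Free.colorable_of_isNClique [Finite V] (hfree : TwoK2Free G) {m : ℕ} (hm : 4 ≤ m)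
    (hdeg_ge : ∀ v, m ≤ (G.neighborSet v).encard)
    (hdeg_le : ∀ v, (G.neighborSet v).encard ≤ m + 1) (hclique : G.CliqueFree (m + 1))
    {K : Finset V} (hK : G.IsNClique m K) : G.Colorable m := by
  classical
  cases nonempty_fintype V
  obtain ⟨hK, rfl⟩ := hK
  have hdeg : ∀ v, (G.neighborSet v).encard = G.degree v := fun v ↦
    encard_neighborSet_eq_degree v
  refine hfree.colorable_card_of_isClique hK hm hclique (fun v ↦ ?_) fun v ↦ ?_
  · exact_mod_cast hdeg v ▸ hdeg_ge v
  · exact_mod_cast hdeg v ▸ hdeg_le v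

theorem TwoK2Free.colorable_four_of_cliqueFree_four [Finite V] (hfree : TwoK2Free G)
    (hdeg_ge : ∀ v, 4 ≤ (G.neighborSet v).encard) (hdeg_le : ∀ v, (G.neighborSet v).encard ≤ 5)
    (hclique : G.CliqueFree 4) : G.Colorable 4 := by
  by_cases h3 : G.CliqueFree 3
  · exact (hfree.colorable_three_of_cliqueFree_three h3).mono (by norm_num)
  have hdeg : ∀ v, ((G.neighborSet v).ncard : ℕ∞) = (G.neighborSet v).encard := fun v ↦
    (Set.toFinite _).cast_ncard_eq
  refine hfree.colorable_four_of_triangle hclique (fun v ↦ ?_) (fun v ↦ ?_)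
    (SimpleGraph.topEmbeddingOfNotCliqueFree h3).toHom
  · exact_mod_cast hdeg v ▸ hdeg_ge v
  · exact_mod_cast hdeg v ▸ hdeg_le v

theorem colorable_succ_of_forall_induce_compl [Finite V] {n : ℕ}
    (h : ∀ s, Maximal G.IsIndepSet s → (G.induce sᶜ).Colorable n) : G.Colorable (n + 1) := by
  cases nonempty_fintype V
  obtain ⟨s, hs⟩ := SimpleGraph.maximumIndepSet_exists (G := G)
  have hs' := hs.isMaximalIndepSet
  exact colorable_succ_of_isIndepSet hs'.prop (h _ hs')

theorem TwoK2Free.exists_finset_not_colorable_cliqueFree (hfree : TwoK2Free G) {m : ℕ} (hm : 4 ≤ m)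
    (hdeg : ∀ v, (G.neighborSet v).encard ≤ m + 1) (hclique : G.CliqueFree (m + 1))
    (hcol : ¬ G.Colorable m) :
    ∃ s : Finset V, ¬ (G.induce (s : Set V)).Colorable m ∧
      (∀ v, m ≤ ((G.induce (s : Set V)).neighborSet v).encard) ∧
      (∀ v, ((G.induce (s : Set V)).neighborSet v).encard ≤ m + 1) ∧
      (G.induce (s : Set V)).CliqueFree m := by
  obtain ⟨s, hs, hge⟩ := exists_finset_not_colorable_forall_le_encard hcol
  have hle : ∀ v, ((G.induce (s : Set V)).neighborSet v).encard ≤ m + 1 := fun v ↦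
    (encard_neighborSet_induce_le _ v).trans (hdeg v)
  have hclique' := hclique.comap ⟨SimpleGraph.Copy.induce G (s : Set V)⟩
  exact ⟨s, hs, hge, hle, fun K hK ↦
    hs ((hfree.induce _).colorable_of_isNClique hm hge hle hclique' hK)⟩

theorem TwoK2Free.colorable_of_cliqueFree (hfree : TwoK2Free G) {m : ℕ} (hm : 4 ≤ m)
    (hdeg : ∀ v, (G.neighborSet v).encard ≤ m + 1) (hclique : G.CliqueFree (m + 1)) :
    G.Colorable m := by
  induction m, hm using Nat.le_induction generalizing V with
  | base =>
    by_contra hcol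
    obtain ⟨s, hs, hge, hle, hfree4⟩ :=
      hfree.exists_finset_not_colorable_cliqueFree le_rfl hdeg hclique hcol
    exact hs ((hfree.induce _).colorable_four_of_cliqueFree_four hge hle hfree4)
  | succ m hm ih =>
    by_contra hcol
    obtain ⟨s, hs, -, hle, hcliqueFree⟩ :=
      hfree.exists_finset_not_colorable_cliqueFree (hm.trans m.le_succ) hdeg hclique hcol
    refine hs (colorable_succ_of_forall_induce_compl fun I hI ↦ ?_)
    refine ih ((hfree.induce _).induce _) (fun v ↦ ?_)
      (hcliqueFree.comap ⟨SimpleGraph.Copy.induce _ Iᶜ⟩)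
    refine (ENat.add_le_add_iff_right ENat.one_ne_top).1 ?_
    exact (encard_neighborSet_induce_compl_add_one_le hI v).trans (by exact_mod_cast hle v)

theorem twoK2Free_cliqueNum_ge_of_chromatic_eq_maxDegree_general
    {V : Type*} {G : SimpleGraph V} (hfree : TwoK2Free G) {k : ℕ} (hk : 5 ≤ k)
    (hdeg : ∀ v, (G.neighborSet v).encard ≤ k) (hχ : k ≤ G.chromaticNumber) :
    ∃ s : Finset V, G.IsNClique k s := by
  obtain ⟨m, rfl⟩ : ∃ m, k = m + 1 := ⟨k - 1, by omega⟩
  by_contra! hclique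
  have hcol := hfree.colorable_of_cliqueFree (m := m) (by omega) (by exact_mod_cast hdeg) hclique
  have : ((m + 1 : ℕ) : ℕ∞) ≤ m := hχ.trans hcol.chromaticNumber_le
  norm_cast at this
  omega

end Main

theorem twoK2Free_cliqueNum_ge_of_chromatic_eq_maxDegree
    {V : Type*} [Fintype V] (G : SimpleGraph V) [DecidableRel G.Adj]
    (hfree : TwoK2Free G) (hΔ : 5 ≤ G.maxDegree)
    (hχ : G.chromaticNumber = (G.maxDegree : ℕ)) :
    G.maxDegree ≤ G.cliqueNum := by
  obtain ⟨s, hs⟩ := twoK2Free_cliqueNum_ge_of_chromatic_eq_maxDegree_general hfree hΔ (fun v ↦ by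
    rw [encard_neighborSet_eq_degree]
    exact_mod_cast G.degree_le_maxDegree v) hχ.ge
  exact hs.card_eq ▸ hs.isClique.card_le_cliqueNum
end

section
/- Let G be a finite simple 2K2-free graph that is triangle-free (ω(G) = 2) and satisfies χ(G) = 3. Then G contains an induced cycle of length 5. -/
/-!
Fix an edge `ab` of a `2K2`-free graph. Every edge meets or is joined to `ab`, so every non-isolated
vertex is the end of a walk of length two from `a` or from `b`. If there is no closed walk of
length five, then neither the vertices of the first kind nor those of the second span an edge, so
the graph is bipartite. Otherwise there is a homomorphism from `C₅`. When the graph is triangle-free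
this homomorphism reflects adjacency, because non-adjacent vertices of `C₅` have a common neighbour,
and then it is injective, because distinct vertices of `C₅` have distinct neighbourhoods.
-/

section InducedFiveCycle

open SimpleGraph

variable {V W : Type*} {G : SimpleGraph V} {H : SimpleGraph W}

theorem cliqueFree_of_cliqueNum_lt [Finite V] {n : ℕ} (h : G.cliqueNum < n) :
    G.CliqueFree n := by
  intro s hs
  exact h.not_ge (hs.card_eq ▸ hs.isClique.card_le_cliqueNum)

theorem hom_adj_iff_of_cliqueFree_three (hG : G.CliqueFree 3)
    (hH : ∀ i j, i ≠ j → ¬ H.Adj i j → (H.commonNeighbors i j).Nonempty) (f : H →g G) {i j : W} :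
    G.Adj (f i) (f j) ↔ H.Adj i j := by
  classical
  refine ⟨fun hij ↦ ?_, f.map_adj⟩
  by_contra hnot
  obtain ⟨k, hik, hjk⟩ := hH i j (fun h ↦ hij.ne (congrArg f h)) hnot
  exact hG _ (is3Clique_triple_iff.mpr ⟨hij, f.map_adj hik, f.map_adj hjk⟩)

theorem injective_of_adj_iff_of_injective_neighborSet (hH : Function.Injective H.neighborSet)
    {f : W → V} (hf : ∀ i j, G.Adj (f i) (f j) ↔ H.Adj i j) : Function.Injective f := by
  intro i j hij
  refine hH (Set.ext fun k ↦ ?_)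
  simp only [mem_neighborSet, ← hf, hij]

theorem commonNeighbors_cycleGraph_five_nonempty {i j : Fin 5}
    (hij : ¬ (cycleGraph 5).Adj i j) : ((cycleGraph 5).commonNeighbors i j).Nonempty := by
  simp only [Set.Nonempty, mem_commonNeighbors, cycleGraph_adj] at hij ⊢
  revert i j
  decide

theorem neighborSet_cycleGraph_five_injective :
    Function.Injective (cycleGraph 5).neighborSet := by
  intro i j hij
  simp only [Set.ext_iff, mem_neighborSet, cycleGraph_adj] at hij
  revert i j
  decide

theorem nonempty_cycleGraph_five_embedding_of_hom (hG : G.CliqueFree 3) (f : cycleGraph 5 →g G) :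
    Nonempty (cycleGraph 5 ↪g G) := by
  have hadj (i j : Fin 5) : G.Adj (f i) (f j) ↔ (cycleGraph 5).Adj i j :=
    hom_adj_iff_of_cliqueFree_three hG (fun _ _ _ ↦ commonNeighbors_cycleGraph_five_nonempty) f
  have hinj : Function.Injective f :=
    injective_of_adj_iff_of_injective_neighborSet neighborSet_cycleGraph_five_injective hadj
  exact ⟨⟨⟨f, hinj⟩, hadj _ _⟩⟩

theorem nonempty_cycleGraph_five_hom_of_adj {a u v : V} (huv : G.Adj u v)
    (hu : (G.commonNeighbors a u).Nonempty) (hv : (G.commonNeighbors a v).Nonempty) :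
    Nonempty (cycleGraph 5 →g G) := by
  obtain ⟨x, hax, hux⟩ := hu
  obtain ⟨y, hay, hvy⟩ := hv
  simp only [mem_neighborSet] at hax hux hay hvy
  let w : Fin 5 → V := ![a, x, u, v, y]
  have hsucc (i : Fin 5) : G.Adj (w i) (w (i + 1)) := by
    fin_cases i
    exacts [hax, hux.symm, huv, hvy, hay.symm]
  refine ⟨⟨w, fun {i j} hij ↦ ?_⟩⟩
  rcases cycleGraph_adj.mp hij with h | h
  · obtain rfl : i = j + 1 := sub_eq_iff_eq_add'.mp h
    exact (hsucc j).symm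
  · obtain rfl : j = i + 1 := sub_eq_iff_eq_add'.mp h
    exact hsucc i

namespace TwoK2Free

variable {a b c d u v : V}

theorem adj_or_adj (hG : TwoK2Free G) (hab : G.Adj a b) (hcd : G.Adj c d) :
    G.Adj a c ∨ G.Adj a d ∨ G.Adj b c ∨ G.Adj b d := by
  by_contra! ⟨hac, had, hbc, hbd⟩
  refine hG ⟨a, b, c, d, hab.ne, ?_, ?_, ?_, ?_, hcd.ne, hab, hcd, hac, had, hbc, hbd⟩
  · rintro rfl; exact had hcd
  · rintro rfl; exact hac hcd.symm
  · rintro rfl; exact hbd hcd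
  · rintro rfl; exact hbc hcd.symm

theorem commonNeighbors_nonempty_or (hG : TwoK2Free G) (hab : G.Adj a b) (huv : G.Adj u v) :
    (G.commonNeighbors a u).Nonempty ∨ (G.commonNeighbors b u).Nonempty := by
  rcases hG.adj_or_adj hab huv with hau | hav | hbu | hbv
  · exact .inr ⟨a, hab.symm, hau.symm⟩
  · exact .inl ⟨v, hav, huv⟩
  · exact .inl ⟨b, hab, hbu.symm⟩
  · exact .inr ⟨v, hbv, huv⟩

theorem nonempty_cycleGraph_five_hom (hG : TwoK2Free G) (hbip : ¬ G.IsBipartite) :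
    Nonempty (cycleGraph 5 →g G) := by
  by_contra hhom
  have not_nonempty_of_adj {c u v : V} (huv : G.Adj u v) (hu : (G.commonNeighbors c u).Nonempty) :
      ¬ (G.commonNeighbors c v).Nonempty :=
    fun hv ↦ hhom (nonempty_cycleGraph_five_hom_of_adj huv hu hv)
  have hbot : G ≠ ⊥ := fun h ↦ hbip ((colorable_one_iff.mpr h).mono one_le_two)
  obtain ⟨a, b, hab⟩ := ne_bot_iff_exists_adj.mp hbot
  let s : Set V := {v | (G.commonNeighbors a v).Nonempty}
  refine hbip (isBipartite_iff_exists_isBipartiteWith.mpr ⟨s, sᶜ, disjoint_compl_right, ?_⟩)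
  intro u v huv
  by_cases hu : u ∈ s
  · exact .inl ⟨hu, not_nonempty_of_adj huv hu⟩
  · have hbu : (G.commonNeighbors b u).Nonempty :=
      (hG.commonNeighbors_nonempty_or hab huv).resolve_left hu
    have hv : v ∈ s := (hG.commonNeighbors_nonempty_or hab huv.symm).resolve_right
      (not_nonempty_of_adj huv hbu)
    exact .inr ⟨hu, hv⟩

end TwoK2Free

end InducedFiveCycle

theorem twoK2Free_triangleFree_chromatic_three_has_induced_C5_general
    {V : Type*} {G : SimpleGraph V} (hfree : TwoK2Free G) (htri : G.CliqueFree 3)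
    (hbip : ¬ G.IsBipartite) : Nonempty (SimpleGraph.cycleGraph 5 ↪g G) := by
  obtain ⟨f⟩ := hfree.nonempty_cycleGraph_five_hom hbip
  exact nonempty_cycleGraph_five_embedding_of_hom htri f

theorem twoK2Free_triangleFree_chromatic_three_has_induced_C5
    {V : Type*} [Fintype V] (G : SimpleGraph V)
    (hfree : TwoK2Free G) (hω : G.cliqueNum = 2)
    (hχ : G.chromaticNumber = 3) :
    Nonempty (SimpleGraph.cycleGraph 5 ↪g G) := by
  have hbip : ¬ G.IsBipartite := fun h ↦ absurd (hχ ▸ h.chromaticNumber_le) (by decide)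
  exact twoK2Free_triangleFree_chromatic_three_has_induced_C5_general hfree
    (cliqueFree_of_cliqueNum_lt (hω ▸ Nat.lt_succ_self 2)) hbip
end

section
/- Let G be a finite simple 2K2-free graph with maximum degree Δ(G) ≥ 3 such that χ(G) > max{ω(G), Δ(G) − 1}. Then χ(G) = Δ(G) and ω(G) < Δ(G). -/
/-!
By Brooks' theorem `χ ≤ max ω Δ` as soon as `Δ ≥ 3`, so `χ > max ω (Δ - 1)` forces `ω < Δ` and
`χ = Δ`.

Brooks' theorem is proved following Zając. Vertices are coloured greedily, each one while some
neighbour is still uncoloured, so that only the last vertex needs care: it is harmless if it has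
degree less than `k` or two neighbours of the same colour. In a connected `k`-regular graph other
than `K_{k+1}`, extend a path `x, v, y` with `x`, `y` non-adjacent to a path ending at a vertex `z`
all of whose neighbours lie on the path. If the path is Hamiltonian, then removing `x` and `y`
leaves a connected graph; give `x` and `y` the same colour and finish at `v`. Otherwise `z` lies on
a cycle through all its neighbours that misses some vertex. Some edge `wr` of the graph then joins a
cycle vertex `w` without neighbours off the cycle to a cycle vertex `r` with a neighbour `y` off the
cycle; colour the outside of the cycle, give `w` the colour of `y`, and finish at `r`.
-/

section Brooks

open SimpleGraph Walk Set

variable {V : Type*} {G : SimpleGraph V}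

theorem exists_adj_mem_notMem_of_preconnected (hG : G.Preconnected) {s : Set V} {a b : V}
    (ha : a ∈ s) (hb : b ∉ s) : ∃ v ∈ s, ∃ w ∉ s, G.Adj v w := by
  obtain ⟨p⟩ := hG a b
  obtain ⟨d, -, hfst, hsnd⟩ := p.exists_boundary_dart s ha hb
  exact ⟨d.fst, hfst, d.snd, hsnd, d.adj⟩

theorem exists_adj_mem_mem_sdiff_of_induce_preconnected {s t : Set V}
    (ht : (G.induce t).Preconnected) (hst : s ⊆ t) {a b : V} (ha : a ∈ s) (hb : b ∈ t \ s) :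
    ∃ v ∈ s, ∃ w ∈ t \ s, G.Adj v w := by
  obtain ⟨v, hv, w, hw, hvw⟩ :=
    exists_adj_mem_notMem_of_preconnected ht (s := Subtype.val ⁻¹' s) (a := ⟨a, hst ha⟩)
      (b := ⟨b, hb.1⟩) ha hb.2
  exact ⟨v, hv, w, ⟨w.2, hw⟩, hvw⟩

theorem connected_induce_support_sdiff_singleton_start {u v : V} {p : G.Walk u v} (hp : p.IsPath)
    (hnil : ¬ p.Nil) : (G.induce ({x | x ∈ p.support} \ {u})).Connected := by
  cases p with
  | nil => simp at hnil
  | cons h q =>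
    have hu : u ∉ q.support := ((cons_isPath_iff h q).1 hp).2
    have hset : {x | x ∈ (cons h q).support} \ {u} = {x | x ∈ q.support} := by
      ext x
      simp only [support_cons, List.mem_cons, mem_sdiff, mem_ofPred_eq, mem_singleton_iff]
      grind
    exact hset ▸ q.connected_induce_support

theorem connected_induce_support_sdiff_singleton_of_isCycle {u w : V} {c : G.Walk u u}
    (hc : c.IsCycle) (hw : w ∈ c.support) :
    (G.induce ({x | x ∈ c.support} \ {w})).Connected := by
  classical
  have hc' : (c.rotate w hw).IsCycle := (isCycle_rotate hw).2 hc
  have hnil : ¬ (c.rotate w hw).dropLast.Nil := by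
    have := hc'.three_le_length
    rw [← length_eq_zero_iff, length_dropLast]
    omega
  have hmem (x : V) : x ∈ c.support ↔ x ∈ (c.rotate w hw).dropLast.support ∨ x = w := by
    rw [← c.mem_support_rotate_iff w hw, ← (c.rotate w hw).dropLast_support_concat,
      support_dropLast hc'.not_nil, List.mem_append, List.mem_singleton]
  have hset : {x | x ∈ c.support} \ {w} = {x | x ∈ (c.rotate w hw).dropLast.support} \ {w} := by
    ext x
    simp only [mem_sdiff, mem_ofPred_eq, mem_singleton_iff, hmem]
    tauto
  exact hset ▸ connected_induce_support_sdiff_singleton_start hc'.isPath_dropLast hnil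

theorem connected_induce_compl_pair_of_isPath [G.LocallyFinite] {x v y z : V} {hxv : G.Adj x v}
    {hvy : G.Adj v y} {p : G.Walk y z} (hp : (cons hxv (cons hvy p)).IsPath)
    (hcover : ∀ w, w ∈ (cons hxv (cons hvy p)).support) (hv : 3 ≤ G.degree v) :
    (G.induce {x, y}ᶜ).Connected := by
  classical
  simp only [cons_isPath_iff, support_cons, List.mem_cons, not_or] at hp hcover
  obtain ⟨⟨hpath, -⟩, -, hxp⟩ := hp
  obtain ⟨a, hva, ha⟩ := Finset.exists_mem_notMem_of_card_lt_card
    (s := {x, y}) (t := G.neighborFinset v)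
    (Finset.card_le_two.trans_lt (by simpa using Nat.lt_of_succ_le hv))
  rw [mem_neighborFinset] at hva
  simp only [Finset.mem_insert, Finset.mem_singleton, not_or] at ha
  have hap : a ∈ p.support := by grind [hva.ne]
  have hnil : ¬ p.Nil := fun h => ha.2 (by simpa [nil_iff_support_eq.1 h] using hap)
  have hset : {x, y}ᶜ = ({w | w ∈ p.support} \ {y}) ∪ {v} := by
    ext w
    simp only [mem_compl_iff, mem_insert_iff, mem_singleton_iff, mem_union, mem_sdiff,
      mem_ofPred_eq]
    grind [hxv.ne, hvy.ne]
  rw [hset]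
  exact connected_induce_union
    (connected_induce_support_sdiff_singleton_start hpath hnil).preconnected .of_subsingleton
    ⟨hap, ha.2⟩ (mem_singleton v) hva.symm

theorem exists_isPath_append_forall_adj_mem_support [Finite V] {a b : V} (p : G.Walk a b)
    (hp : p.IsPath) :
    ∃ (z : V) (q : G.Walk b z), (p.append q).IsPath ∧
      ∀ w, G.Adj z w → w ∈ (p.append q).support := by
  by_cases! h : ∀ w, G.Adj b w → w ∈ p.support
  · exact ⟨b, nil, by simpa using hp, by simpa using h⟩
  · obtain ⟨w, hbw, hw⟩ := h
    obtain ⟨z, q, hq, hz⟩ := exists_isPath_append_forall_adj_mem_support _ (hp.concat hw hbw)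
    rw [concat_append] at hq hz
    exact ⟨z, cons hbw q, hq, hz⟩
termination_by Nat.card V - p.length
decreasing_by
  have := Fintype.ofFinite V
  have hlt := (hp.concat hw hbw).length_lt
  simp only [length_concat, Nat.card_eq_fintype_card] at hlt ⊢
  omega

theorem exists_isCycle_of_forall_adj_mem_support {a z : V} {p : G.Walk a z} (hp : p.IsPath)
    (hz : (G.neighborSet z).Nontrivial) (hsub : ∀ w, G.Adj z w → w ∈ p.support) :
    ∃ c : G.Walk z z, c.IsCycle ∧ c.support ⊆ p.support ∧ ∀ w, G.Adj z w → w ∈ c.support := by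
  induction p with
  | nil =>
    obtain ⟨x, hx⟩ := hz.nonempty
    have := hsub x hx
    simp_all
  | @cons a b z h q ih =>
    have hq : q.IsPath := hp.of_cons
    by_cases hza : G.Adj z a
    · refine ⟨cons hza (cons h q), (cons_isCycle_iff _ _).2 ⟨hp, fun hmem => ?_⟩, ?_, ?_⟩
      · have hnil : q.Nil := length_eq_zero_iff.1 <| by
          simpa using hp.length_eq_one_of_mem_edges (Sym2.eq_swap ▸ hmem)
        obtain ⟨x, hzx, hxa⟩ := hz.exists_ne a
        have hx := hsub x hzx
        rw [support_cons, nil_iff_support_eq.1 hnil, hnil.eq] at hx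
        simp_all
      · simp
      · simpa using fun w hw => Or.inr (hsub w hw)
    · obtain ⟨c, hc, hcq, hcz⟩ := ih hq hz fun w hw => by
          have := hsub w hw
          grind [support_cons]
      exact ⟨c, hc, fun x hx => List.mem_cons_of_mem _ (hcq hx), hcz⟩

/-- `c` is a proper colouring of the subgraph induced on `s`; a total function is used so that
colourings can be extended by updating them, and its values outside `s` are irrelevant. -/
def ProperOn {α : Type*} (G : SimpleGraph V) (s : Set V) (c : V → α) : Prop :=
  ∀ ⦃v⦄, v ∈ s → ∀ ⦃w⦄, w ∈ s → G.Adj v w → c v ≠ c w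

theorem ProperOn.update {α : Type*} [DecidableEq V] {s : Set V} {c : V → α} (hc : ProperOn G s c)
    {v : V} {q : α} (hq : ∀ w ∈ s, G.Adj v w → c w ≠ q) :
    ProperOn G (insert v s) (Function.update c v q) := by
  intro a ha b hb hab
  have := hab.ne
  rcases eq_or_ne a v with rfl | hav <;> rcases eq_or_ne b a with rfl | hbv
  all_goals grind [Function.update_self, Function.update_of_ne, G.adj_comm, ProperOn]

theorem ProperOn.colorable {k : ℕ} {c : V → Fin k} (hc : ProperOn G univ c) : G.Colorable k :=
  ⟨Coloring.mk c fun h => hc (mem_univ _) (mem_univ _) h⟩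

section Greedy

variable [G.LocallyFinite] {k : ℕ}

theorem exists_color_ne_of_degree_lt {v : V} (hv : G.degree v < k) (c : V → Fin k) :
    ∃ q, ∀ u, G.Adj v u → c u ≠ q := by
  obtain ⟨q, -, hq⟩ := Finset.exists_mem_notMem_of_card_lt_card
    (s := (G.neighborFinset v).image c) (t := Finset.univ)
    (Finset.card_image_le.trans_lt (by simpa using hv))
  exact ⟨q, by simpa using hq⟩

theorem exists_color_ne_of_adj {v w : V} (hvw : G.Adj v w) (hv : G.degree v ≤ k) (c : V → Fin k) :
    ∃ q, ∀ u, G.Adj v u → u ≠ w → c u ≠ q := by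
  classical
  have hlt : ((G.neighborFinset v).erase w).card < k :=
    (Finset.card_erase_lt_of_mem (by simpa using hvw)).trans_le (by simpa using hv)
  obtain ⟨q, -, hq⟩ := Finset.exists_mem_notMem_of_card_lt_card
    (s := ((G.neighborFinset v).erase w).image c) (t := Finset.univ)
    (Finset.card_image_le.trans_lt (by simpa using hlt))
  exact ⟨q, fun u hvu huw hu => hq (Finset.mem_image.2 ⟨u, by simp [huw, hvu], hu⟩)⟩

theorem ProperOn.exists_union {s t : Set V} {c : V → Fin k} (hc : ProperOn G s c)
    (ht : t.Finite) (hst : Disjoint s t) (hdeg : ∀ v ∈ t, G.degree v ≤ k)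
    (hout : ∀ u ⊆ t, u.Nonempty → ∃ v ∈ u, ∃ w ∉ s ∪ u, G.Adj v w) :
    ∃ c' : V → Fin k, ProperOn G (s ∪ t) c' ∧ EqOn c' c s := by
  classical
  lift t to Finset V using ht
  induction t using Finset.strongInduction with
  | H t ih =>
    rcases t.eq_empty_or_nonempty with rfl | hne
    · exact ⟨c, by simpa using hc, eqOn_refl _ _⟩
    -- `v` is coloured last, while its neighbour `w` stays uncoloured.
    obtain ⟨v, hv, w, hw, hvw⟩ := hout t Subset.rfl hne
    have hsub : (↑(t.erase v) : Set V) ⊆ t := by simp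
    obtain ⟨c₁, hc₁, hc₁s⟩ := ih (t.erase v) (Finset.erase_ssubset hv) (hst.mono_right hsub)
      (fun u hu => hdeg u (hsub hu)) fun u hu => hout u (hu.trans hsub)
    obtain ⟨q, hq⟩ := exists_color_ne_of_adj hvw (hdeg v hv) c₁
    have hvs : v ∉ s := hst.notMem_of_mem_right hv
    refine ⟨Function.update c₁ v q, ?_, fun x hx => ?_⟩
    · have := hc₁.update (v := v) fun u hu hvu =>
        hq u hvu (ne_of_mem_of_not_mem (union_subset_union_right _ hsub hu) hw)
      rwa [← union_insert, ← Finset.coe_insert, Finset.insert_erase hv] at this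
    · rw [Function.update_of_ne (ne_of_mem_of_not_mem hx hvs), hc₁s hx]

theorem exists_properOn_compl [Finite V] [NeZero k] (hG : G.Preconnected)
    (hdeg : ∀ v, G.degree v ≤ k) {s : Set V} (hs : s.Nonempty) :
    ∃ c : V → Fin k, ProperOn G sᶜ c := by
  obtain ⟨a, ha⟩ := hs
  obtain ⟨c, hc, -⟩ := ProperOn.exists_union (G := G) (s := ∅) (t := sᶜ) (c := fun _ => (0 : Fin k))
    (by simp [ProperOn]) (toFinite _) (by simp) (fun v _ => hdeg v) fun u hu ⟨b, hb⟩ => by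
      simpa using exists_adj_mem_notMem_of_preconnected hG hb fun hau => hu hau ha
  exact ⟨c, by simpa using hc⟩

theorem ProperOn.exists_union_of_preconnected {s t : Set V} {c : V → Fin k} (hc : ProperOn G s c)
    (ht : t.Finite) (hst : Disjoint s t) (hdeg : ∀ v ∈ t, G.degree v ≤ k)
    (hconn : (G.induce t).Preconnected) {r x y : V} (hr : r ∈ t) (hx : x ∈ s) (hy : y ∈ s)
    (hxy : x ≠ y) (hrx : G.Adj r x) (hry : G.Adj r y) (hcxy : c x = c y) :
    ∃ c' : V → Fin k, ProperOn G (s ∪ t) c' := by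
  classical
  obtain ⟨c₁, hc₁, hc₁s⟩ := hc.exists_union (t := t \ {r}) ht.sdiff (hst.mono_right sdiff_subset)
    (fun v hv => hdeg v hv.1) fun u hu ⟨b, hb⟩ => by
      obtain ⟨v, hv, w, hw, hvw⟩ := exists_adj_mem_mem_sdiff_of_induce_preconnected hconn
        (hu.trans sdiff_subset) hb ⟨hr, fun h => (hu h).2 rfl⟩
      exact ⟨v, hv, w, not_or.2 ⟨hst.notMem_of_mem_right hw.1, hw.2⟩, hvw⟩
  obtain ⟨q, hq⟩ := exists_color_ne_of_adj hry (hdeg r hr) c₁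
  have hfree : ∀ u, G.Adj r u → c₁ u ≠ q := fun u hu => by
    by_cases huy : u = y
    · rw [huy, hc₁s hy, ← hcxy, ← hc₁s hx]
      exact hq x hrx hxy
    · exact hq u hu huy
  have := hc₁.update (v := r) fun u _ => hfree u
  rw [← union_insert, insert_sdiff_singleton, insert_eq_of_mem hr] at this
  exact ⟨_, this⟩

theorem colorable_of_exists_degree_lt [Finite V] (hG : G.Preconnected)
    (hdeg : ∀ v, G.degree v ≤ k) (hlt : ∃ v, G.degree v < k) : G.Colorable k := by
  classical
  obtain ⟨v, hv⟩ := hlt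
  have : NeZero k := .of_pos (Nat.zero_lt_of_lt hv)
  obtain ⟨c, hc⟩ := exists_properOn_compl hG hdeg (singleton_nonempty v)
  obtain ⟨q, hq⟩ := exists_color_ne_of_degree_lt hv c
  have := hc.update (v := v) fun u _ => hq u
  rw [insert_eq, union_compl_self] at this
  exact this.colorable

theorem colorable_of_preconnected_induce_compl_pair [Finite V] (hdeg : ∀ v, G.degree v ≤ k)
    {v x y : V} (hvx : G.Adj v x) (hvy : G.Adj v y) (hxy : x ≠ y) (hnadj : ¬ G.Adj x y)
    (hconn : (G.induce {x, y}ᶜ).Preconnected) : G.Colorable k := by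
  have : NeZero k := .of_pos (G.degree_pos_iff_exists_adj v |>.2 ⟨x, hvx⟩ |>.trans_le (hdeg v))
  have hpair : ProperOn G {x, y} fun _ => (0 : Fin k) := by
    rintro a (rfl | rfl) b (rfl | rfl) hab <;> simp_all [G.adj_comm]
  obtain ⟨c, hc⟩ := hpair.exists_union_of_preconnected (toFinite _) disjoint_compl_right
    (fun v _ => hdeg v) hconn (r := v) (by simp [hvx.ne, hvy.ne]) (by simp) (by simp) hxy hvx hvy
    rfl
  rw [union_compl_self] at hc
  exact hc.colorable

theorem colorable_of_isCycle_of_forall_adj_mem_support [Finite V] (hG : G.Preconnected)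
    (hdeg : ∀ v, G.degree v ≤ k) {z : V} {c : G.Walk z z} (hc : c.IsCycle)
    (hz : ∀ w, G.Adj z w → w ∈ c.support) (hne : ∃ u, u ∉ c.support) : G.Colorable k := by
  classical
  let C : Set V := {v | v ∈ c.support}
  obtain ⟨u, hu⟩ := hne
  obtain ⟨a, haC, b, hbC, hab⟩ : ∃ a ∈ C, ∃ b ∉ C, G.Adj a b :=
    exists_adj_mem_notMem_of_preconnected hG c.start_mem_support hu
  let closed : Set V := {v ∈ C | ∀ w, G.Adj v w → w ∈ C}
  obtain ⟨w, ⟨hwC, hw⟩, r, ⟨hrC, hrw⟩, hwr⟩ :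
      ∃ w ∈ closed, ∃ r ∈ C \ closed, G.Adj w r :=
    exists_adj_mem_mem_sdiff_of_induce_preconnected c.connected_induce_support.preconnected
      (sep_subset _ _) (a := z) ⟨c.start_mem_support, hz⟩ (b := a)
      ⟨haC, fun h => hbC (h.2 b hab)⟩
  obtain ⟨y, hry, hyC⟩ : ∃ y, G.Adj r y ∧ y ∉ C := by
    simpa [closed, hrC] using hrw
  have : NeZero k := .of_pos (G.degree_pos_iff_exists_adj r |>.2 ⟨y, hry⟩ |>.trans_le (hdeg r))
  obtain ⟨d, hd⟩ := exists_properOn_compl hG hdeg (s := C) ⟨z, c.start_mem_support⟩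
  -- Repeating the colour of `y` at `w` is allowed because no neighbour of `w` is coloured yet, and
  -- it gives `r` two neighbours of the same colour.
  have hd' : ProperOn G (insert w Cᶜ) (Function.update d w (d y)) :=
    hd.update fun v hv hwv => absurd (hw v hwv) hv
  have hwy : w ≠ y := ne_of_mem_of_not_mem hwC hyC
  obtain ⟨e, he⟩ := hd'.exists_union_of_preconnected (t := C \ {w}) (toFinite _) (by
      rw [disjoint_insert_left]
      simpa using disjoint_compl_left.mono_right sdiff_subset) (fun v _ => hdeg v)
    (connected_induce_support_sdiff_singleton_of_isCycle hc hwC).preconnected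
    (r := r) ⟨hrC, hwr.ne'⟩ (mem_insert w _) (mem_insert_of_mem _ hyC) hwy hwr.symm hry
    (by simp [hwy.symm])
  have huniv : insert w Cᶜ ∪ C \ {w} = univ := by
    rw [insert_union, ← union_insert, insert_sdiff_singleton, insert_eq_of_mem hwC,
      compl_union_self]
  exact (huniv ▸ he).colorable

end Greedy

theorem exists_adj_adj_not_adj_of_cliqueFree [G.LocallyFinite] {v : V}
    (hv : G.CliqueFree (G.degree v + 1)) :
    ∃ x y, G.Adj v x ∧ G.Adj v y ∧ x ≠ y ∧ ¬ G.Adj x y := by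
  classical
  by_contra! hcon
  refine hv (insert v (G.neighborFinset v)) ⟨?_, by simp⟩
  rw [Finset.coe_insert, coe_neighborFinset, isClique_insert]
  exact ⟨fun x hx y hy => hcon x y hx hy, fun _ hb _ => hb⟩

theorem colorable_of_connected_of_forall_degree_le_of_cliqueFree [Finite V] [G.LocallyFinite]
    {k : ℕ} (hk : 3 ≤ k) (hG : G.Connected) (hdeg : ∀ v, G.degree v ≤ k)
    (hfree : G.CliqueFree (k + 1)) : G.Colorable k := by
  by_cases! hlt : ∃ v, G.degree v < k
  · exact colorable_of_exists_degree_lt hG.preconnected hdeg hlt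
  have hreg (v : V) : G.degree v = k := (hdeg v).antisymm (hlt v)
  obtain ⟨v⟩ := hG.nonempty
  obtain ⟨x, y, hvx, hvy, hxy, hnadj⟩ := exists_adj_adj_not_adj_of_cliqueFree (hreg v ▸ hfree)
  obtain ⟨z, q, hq, hz⟩ := exists_isPath_append_forall_adj_mem_support
    (cons hvx.symm hvy.toWalk) (by simp [hvx.ne', hxy, hvy.ne])
  by_cases! hcover : ∀ w, w ∈ (cons hvx.symm (cons hvy q)).support
  · exact colorable_of_preconnected_induce_compl_pair hdeg hvx hvy hxy hnadj
      (connected_induce_compl_pair_of_isPath hq hcover (hreg v ▸ hk)).preconnected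
  · obtain ⟨u, hu⟩ := hcover
    have hnontrivial : (G.neighborSet z).Nontrivial := by
      rw [← coe_neighborFinset]
      refine Finset.one_lt_card_iff_nontrivial.1 ?_
      rw [card_neighborFinset_eq_degree, hreg]
      omega
    obtain ⟨c, hc, hcq, hcz⟩ := exists_isCycle_of_forall_adj_mem_support hq hnontrivial hz
    exact colorable_of_isCycle_of_forall_adj_mem_support hG.preconnected hdeg hc hcz
      ⟨u, fun h => hu (hcq h)⟩

theorem colorable_of_forall_degree_le_of_cliqueFree [Finite V] [G.LocallyFinite] {k : ℕ}
    (hk : 3 ≤ k) (hdeg : ∀ v, G.degree v ≤ k) (hfree : G.CliqueFree (k + 1)) : G.Colorable k := by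
  classical
  have := Fintype.ofFinite V
  refine colorable_iff_forall_connectedComponent.2 fun C => ?_
  let f : Copy C.toSimpleGraph G := (Embedding.induce C.supp).toCopy
  exact colorable_of_connected_of_forall_degree_le_of_cliqueFree hk C.connected_toSimpleGraph
    (fun v => (f.degree_le v).trans (hdeg _)) (hfree.comap ⟨f⟩)

theorem chromaticNumber_le_max_cliqueNum_maxDegree [Fintype V] [DecidableRel G.Adj]
    (hΔ : 3 ≤ G.maxDegree) : G.chromaticNumber ≤ (max G.cliqueNum G.maxDegree : ℕ) := by
  refine (colorable_of_forall_degree_le_of_cliqueFree (hΔ.trans (le_max_right _ _))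
    (fun v => (G.degree_le_maxDegree v).trans (le_max_right _ _)) fun s hs => ?_).chromaticNumber_le
  have := hs.card_eq ▸ hs.isClique.card_le_cliqueNum
  omega

end Brooks

theorem twoK2Free_counterexample_chromatic_eq_maxDegree_general
    {V : Type*} [Fintype V] (G : SimpleGraph V) [DecidableRel G.Adj] (hΔ : 3 ≤ G.maxDegree)
    (hχ : (max G.cliqueNum (G.maxDegree - 1) : ℕ) < G.chromaticNumber) :
    G.chromaticNumber = (G.maxDegree : ℕ) ∧ G.cliqueNum < G.maxDegree := by
  have hle := chromaticNumber_le_max_cliqueNum_maxDegree hΔ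
  lift G.chromaticNumber to ℕ using ne_top_of_le_ne_top (ENat.natCast_ne_top _) hle with n
  norm_cast at hle hχ ⊢
  omega

theorem twoK2Free_counterexample_chromatic_eq_maxDegree
    {V : Type*} [Fintype V] (G : SimpleGraph V) [DecidableRel G.Adj]
    (hfree : TwoK2Free G) (hΔ : 3 ≤ G.maxDegree)
    (hχ : (max G.cliqueNum (G.maxDegree - 1) : ℕ) < G.chromaticNumber) :
    G.chromaticNumber = (G.maxDegree : ℕ) ∧ G.cliqueNum < G.maxDegree :=
  twoK2Free_counterexample_chromatic_eq_maxDegree_general G hΔ hχ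
end
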